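/- arXiv:1410.8198 — 3 statements merged into one kernel-verified Lean document; each statement's English description precedes it below -/
import Mathlib

section
/- For an integer ℓ ≥ 1, let η(ℓ) denote the infimum, over all admissible sets B of ℓ distinct integers and all sets A ⊆ ℤ with the property that for every integer t ∉ B such that B ∪ {t} is admissible there exists b ∈ B with t − b ∈ A, of the lower density of A. Then η(ℓ) · ℓ · log ℓ → e^{−γ} as ℓ → ∞, where γ is the Euler–Mascheroni constant. -/
open Filter

/-- A set of integers is admissible if, for every prime `p`, its elements do not
cover all residue classes mod `p`. -/
def AdmissibleSet (B : Set ℤ) : Prop :=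
  ∀ p : ℕ, p.Prime → ∃ r : ZMod p, ∀ b ∈ B, (b : ZMod p) ≠ r

/-- The lower density of a set of integers: `liminf_{x → ∞} |A ∩ [1,x]| / x`. -/
noncomputable def lowerDensity (A : Set ℤ) : ℝ :=
  Filter.liminf (fun x : ℕ => (Nat.card (A ∩ Set.Icc 1 (x : ℤ) : Set ℤ) : ℝ) / x)
    Filter.atTop

/-- The upper density of a set of integers: `limsup_{x → ∞} |A ∩ [1,x]| / x`. -/
noncomputable def upperDensity (A : Set ℤ) : ℝ :=
  Filter.limsup (fun x : ℕ => (Nat.card (A ∩ Set.Icc 1 (x : ℤ) : Set ℤ) : ℝ) / x)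
    Filter.atTop

/-- `η(ℓ)`: the infimum, over admissible sets `B` of `ℓ` distinct integers and sets
`A ⊆ ℤ` such that whenever `B ∪ {t}` is admissible (with `t ∉ B`) some `t - b` lies
in `A`, of the lower density of `A`. -/
noncomputable def eta (ℓ : ℕ) : ℝ :=
  sInf { d : ℝ | ∃ (B : Finset ℤ) (A : Set ℤ), B.card = ℓ ∧ AdmissibleSet ↑B ∧
    (∀ t : ℤ, t ∉ B → AdmissibleSet (insert t (B : Set ℤ)) → ∃ b ∈ B, t - b ∈ A) ∧
    d = lowerDensity A }

theorem Real.log_factorial_eq_sum_primesLE (N : ℕ) :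
    Real.log (N.factorial : ℝ) =
      ∑ p ∈ N.primesLE, (N.factorial.factorization p : ℝ) * Real.log p := by
  rw [Real.log_nat_eq_sum_factorization]
  apply Finsupp.sum_of_support_subset
  · intro p hp
    rw [Nat.support_factorization, Nat.mem_primeFactors] at hp
    exact Nat.mem_primesLE.2 ⟨(hp.1.dvd_factorial).1 hp.2.1, hp.1⟩
  · simp

theorem Nat.Prime.div_le_factorization_factorial {p : ℕ} (hp : p.Prime) (N : ℕ) :
    N / p ≤ N.factorial.factorization p := by
  rw [← hp.pow_dvd_iff_le_factorization N.factorial_ne_zero]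
  calc p ^ (N / p) ∣ p ^ (N / p) * (N / p).factorial := Dvd.intro _ rfl
    _ ∣ (p * (N / p)).factorial := by
        induction N / p with
        | zero => simp
        | succ k ih =>
          have h : (p * (k + 1)).factorial = (p * (k + 1)) * (p * (k + 1) - 1).factorial :=
            (Nat.mul_factorial_pred (by simp [hp.ne_zero])).symm
          have h2 : (p * k).factorial ∣ (p * (k + 1) - 1).factorial :=
            Nat.factorial_dvd_factorial (by have := hp.one_lt; rw [mul_add]; omega)
          rw [h, pow_succ, Nat.factorial_succ]
          calc p ^ k * p * ((k + 1) * k.factorial) = p * (k + 1) * (p ^ k * k.factorial) := by ring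
            _ ∣ _ := Nat.mul_dvd_mul_left _ (ih.trans h2)
    _ ∣ N.factorial := Nat.factorial_dvd_factorial (Nat.mul_div_le N p)

theorem summable_log_div_mul_sub_one :
    Summable fun n : ℕ => Real.log n / (n * (n - 1)) := by
  have h : Summable fun n : ℕ => 4 * ((n : ℝ) ^ (-(3 / 2) : ℝ)) :=
    (Real.summable_nat_rpow.2 (by norm_num)).mul_left 4
  refine h.of_norm_bounded_eventually_nat ?_
  filter_upwards [eventually_ge_atTop 2] with n hn
  have hn' : (2 : ℝ) ≤ n := by exact_mod_cast hn
  have hlog : Real.log n ≤ (n : ℝ) ^ (1 / 2 : ℝ) / (1 / 2) :=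
    Real.log_le_rpow_div (by positivity) (by norm_num)
  have hlog0 : 0 ≤ Real.log n := Real.log_nonneg (by linarith)
  have h1 : (0:ℝ) < n - 1 := by linarith
  rw [Real.norm_of_nonneg (by positivity), div_le_iff₀ (by positivity)]
  have e : (n : ℝ) ^ (-(3 / 2) : ℝ) * (n * n) = (n : ℝ) ^ (1 / 2 : ℝ) := by
    rw [show (n : ℝ) * n = (n : ℝ) ^ (2 : ℝ) by rw [Real.rpow_two]; ring,
      ← Real.rpow_add (by positivity)]
    norm_num
  have e2 : (n : ℝ) * n ≤ 2 * (n * (n - 1)) := by nlinarith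
  have : (n : ℝ) ^ (-(3 / 2) : ℝ) * (n * n) ≤ (n : ℝ) ^ (-(3 / 2) : ℝ) * (2 * (n * (n - 1))) :=
    mul_le_mul_of_nonneg_left e2 (by positivity)
  linarith

/-- **Mertens' first theorem**. -/
theorem exists_abs_sum_log_div_prime_sub_log_le :
    ∃ C : ℝ, ∀ N : ℕ, |∑ p ∈ N.primesLE, Real.log p / p - Real.log N| ≤ C := by
  set D : ℝ := ∑' n : ℕ, Real.log n / (n * (n - 1))
  have hterm (n : ℕ) : 0 ≤ Real.log n / ((n : ℝ) * (n - 1)) := by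
    rcases n.eq_zero_or_pos with rfl | hn
    · simp
    · have : (1 : ℝ) ≤ n := by exact_mod_cast hn
      exact div_nonneg (Real.log_nonneg this) (mul_nonneg (by linarith) (by linarith))
  have hD0 : 0 ≤ D := tsum_nonneg hterm
  refine ⟨D + 1 + Real.log 4, fun N => ?_⟩
  have h4 : 0 ≤ Real.log 4 := Real.log_nonneg (by norm_num)
  rcases N.eq_zero_or_pos with rfl | hN
  · simp; linarith
  have hN' : (0 : ℝ) < N := by exact_mod_cast hN
  have hN1 : (1 : ℝ) ≤ N := by exact_mod_cast hN
  have hfac := Real.log_factorial_eq_sum_primesLE N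
  have htheta : ∑ p ∈ N.primesLE, Real.log p ≤ Real.log 4 * N := by
    rw [← Chebyshev.theta_eq_sum_primesLE_log]
    exact Chebyshev.theta_le_log4_mul_x hN'.le
  have hlogp (p : ℕ) : 0 ≤ Real.log p := Real.log_natCast_nonneg p
  have hupper : N * ∑ p ∈ N.primesLE, Real.log p / p ≤ N * Real.log N + Real.log 4 * N := by
    calc N * ∑ p ∈ N.primesLE, Real.log p / p
        ≤ ∑ p ∈ N.primesLE, ((N.factorial.factorization p : ℝ) * Real.log p + Real.log p) := by
          rw [Finset.mul_sum]
          refine Finset.sum_le_sum fun p hp => ?_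
          have hp' := (Nat.mem_primesLE.1 hp).2
          have h1 : (N : ℝ) / p ≤ N.factorial.factorization p + 1 := by
            have h2 : (N : ℝ) / p < (N / p : ℕ) + 1 := by
              rw [← Nat.floor_div_eq_div (K := ℝ)]; exact Nat.lt_floor_add_one _
            have h3 : ((N / p : ℕ) : ℝ) ≤ N.factorial.factorization p := by
              exact_mod_cast hp'.div_le_factorization_factorial N
            linarith
          calc (N : ℝ) * (Real.log p / p) = N / p * Real.log p := by ring
            _ ≤ (N.factorial.factorization p + 1) * Real.log p := by gcongr
            _ = _ := by ring
      _ = Real.log N.factorial + ∑ p ∈ N.primesLE, Real.log p := by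
          rw [Finset.sum_add_distrib, hfac]
      _ ≤ N * Real.log N + Real.log 4 * N := by
          refine add_le_add ?_ htheta
          rw [← Real.log_pow]
          exact Real.log_le_log (by positivity) (by exact_mod_cast Nat.factorial_le_pow N)
  have hlower : N * Real.log N - N ≤ N * (∑ p ∈ N.primesLE, Real.log p / p + D) := by
    calc N * Real.log N - N ≤ Real.log N.factorial := by
          have h1 := Stirling.le_log_factorial_stirling hN.ne'
          have h2 : 0 ≤ Real.log N := Real.log_nonneg hN1
          have h3 : 0 ≤ Real.log (2 * Real.pi) :=
            Real.log_nonneg (by have := Real.pi_gt_three; linarith)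
          linarith
      _ ≤ ∑ p ∈ N.primesLE,
          (N * (Real.log p / p) + N * (Real.log p / ((p : ℝ) * (p - 1)))) := by
          rw [hfac]
          refine Finset.sum_le_sum fun p hp => ?_
          have hp' := (Nat.mem_primesLE.1 hp).2
          have hp2 : (2 : ℝ) ≤ p := by exact_mod_cast hp'.two_le
          have h1 : (N.factorial.factorization p : ℝ) ≤ N / (p - 1) := by
            have := Nat.factorization_factorial_le_div_pred hp' N
            calc (N.factorial.factorization p : ℝ) ≤ ((N / (p - 1) : ℕ) : ℝ) := by exact_mod_cast this
              _ ≤ N / ((p - 1 : ℕ) : ℝ) := Nat.cast_div_le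
              _ = _ := by rw [Nat.cast_pred hp'.pos]
          calc (N.factorial.factorization p : ℝ) * Real.log p
              ≤ N / (p - 1) * Real.log p := by gcongr
            _ = _ := by
              have : (p : ℝ) - 1 ≠ 0 := by linarith
              field_simp
              ring
      _ = N * (∑ p ∈ N.primesLE, Real.log p / p
            + ∑ p ∈ N.primesLE, Real.log p / ((p : ℝ) * (p - 1))) := by
          rw [Finset.sum_add_distrib, mul_add, Finset.mul_sum, Finset.mul_sum]
      _ ≤ _ := by
          gcongr
          exact summable_log_div_mul_sub_one.sum_le_tsum _ fun n _ => hterm n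
  rw [abs_le]
  constructor
  · have : N * (Real.log N - 1 - D) ≤ N * ∑ p ∈ N.primesLE, Real.log p / p := by linarith
    have := le_of_mul_le_mul_left this hN'
    linarith
  · have : N * ∑ p ∈ N.primesLE, Real.log p / p ≤ N * (Real.log N + Real.log 4) := by linarith
    have := le_of_mul_le_mul_left this hN'
    linarith

theorem Finset.sum_range_succ_ite_prime {M : Type*} [AddCommMonoid M] (g : ℕ → M) (N : ℕ) :
    ∑ n ∈ Finset.range (N + 1), (if n.Prime then g n else 0) = ∑ p ∈ N.primesLE, g p := by
  rw [Nat.primesLE_eq_filter_range, Finset.sum_filter]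

theorem Finset.sum_range_succ_sub_pred {M : Type*} [AddCommGroup M] (g : ℕ → M) (N : ℕ) :
    ∑ n ∈ Finset.range (N + 1), (g n - g (n - 1)) = g N - g 0 := by
  induction N with
  | zero => simp
  | succ N ih => rw [Finset.sum_range_succ, ih]; simp

/-- `Nat.log 2` jumps only at powers of two. -/
theorem Nat.log_two_pred_eq_or (n : ℕ) :
    Nat.log 2 (n - 1) = Nat.log 2 n ∨
      Nat.log 2 n = Nat.log 2 (n - 1) + 1 ∧ n = 2 ^ Nat.log 2 n := by
  rcases Nat.lt_or_ge n 2 with hn | hn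
  · left; interval_cases n <;> simp
  by_cases h : n = 2 ^ Nat.log 2 n
  · right
    refine ⟨?_, h⟩
    generalize Nat.log 2 n = k at h ⊢
    have hk0 : k ≠ 0 := by
      rintro h0; rw [h0] at h; omega
    obtain ⟨j, rfl⟩ := Nat.exists_eq_succ_of_ne_zero hk0
    rw [Nat.succ_eq_add_one]
    congr 1
    symm
    rw [Nat.log_eq_iff (Or.inr ⟨by norm_num, by omega⟩)]
    have : 0 < 2 ^ j := by positivity
    rw [h, Nat.succ_eq_add_one, pow_succ]
    omega
  · left
    rw [Nat.log_eq_iff (Or.inr ⟨by norm_num, by omega⟩)]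
    have h1 := Nat.pow_log_le_self 2 (x := n) (by omega)
    have h2 := Nat.lt_pow_succ_log_self (b := 2) (by norm_num) n
    omega

/-- The increment at `n` of `n ↦ H_{⌊log₂ n⌋}`: it equals `1 / k` at `n = 2 ^ k` with `1 ≤ k`,
and vanishes elsewhere. -/
noncomputable def harmonicLogJump (n : ℕ) : ℝ :=
  harmonic (Nat.log 2 n) - harmonic (Nat.log 2 (n - 1))

theorem harmonicLogJump_eq_inv_log_mul (n : ℕ) :
    harmonicLogJump n = (Real.log (max n 2 : ℕ))⁻¹ *
      (Real.log 2 * Nat.log 2 n - Real.log 2 * Nat.log 2 (n - 1)) := by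
  unfold harmonicLogJump
  rcases Nat.log_two_pred_eq_or n with h | ⟨h, hn⟩
  · simp [h]
  · have h1 : Real.log (max n 2 : ℕ) = (Nat.log 2 (n - 1) + 1) * Real.log 2 := by
      rw [max_eq_left]
      · conv_lhs => rw [hn]
        rw [h]; push_cast; rw [Real.log_pow]; push_cast; ring
      · rw [hn, h, pow_succ]
        have : 0 < 2 ^ Nat.log 2 (n - 1) := by positivity
        omega
    have : Real.log 2 ≠ 0 := (Real.log_pos (by norm_num)).ne'
    rw [h1, h, harmonic_succ]
    push_cast
    field_simp
    ring

theorem abs_log_two_mul_natLog_sub_log_le (N : ℕ) :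
    |Real.log 2 * Nat.log 2 N - Real.log N| ≤ Real.log 2 := by
  have h2 : 0 < Real.log 2 := Real.log_pos (by norm_num)
  rcases N.eq_zero_or_pos with rfl | hN
  · simp [h2.le]
  have h1 : Real.log ((2 ^ Nat.log 2 N : ℕ) : ℝ) ≤ Real.log N :=
    Real.log_le_log (by positivity) (by exact_mod_cast Nat.pow_log_le_self 2 hN.ne')
  have h3 : Real.log N ≤ Real.log ((2 ^ (Nat.log 2 N + 1) : ℕ) : ℝ) :=
    Real.log_le_log (by positivity)
      (by exact_mod_cast (Nat.lt_pow_succ_log_self (b := 2) (by norm_num) N).le)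
  push_cast at h1 h3
  rw [Real.log_pow] at h1 h3
  push_cast at h3
  rw [abs_le]
  constructor <;> linarith

/-- The coefficients comparing the series of reciprocals of primes with the harmonic numbers
`H_{⌊log₂ n⌋}`. -/
noncomputable def primeRecipSubJump (n : ℕ) : ℝ :=
  (if n.Prime then (n : ℝ)⁻¹ else 0) - harmonicLogJump n

theorem sum_range_primeRecipSubJump (N : ℕ) :
    ∑ n ∈ Finset.range (N + 1), primeRecipSubJump n =
      ∑ p ∈ N.primesLE, (p : ℝ)⁻¹ - harmonic (Nat.log 2 N) := by
  unfold primeRecipSubJump harmonicLogJump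
  rw [Finset.sum_sub_distrib, Finset.sum_range_succ_ite_prime,
    Finset.sum_range_succ_sub_pred (fun n => (harmonic (Nat.log 2 n) : ℝ))]
  simp

theorem cauchySeq_sum_primeRecipSubJump :
    CauchySeq fun N => ∑ n ∈ Finset.range N, primeRecipSubJump n := by
  set f : ℕ → ℝ := fun n => (Real.log (max n 2 : ℕ))⁻¹
  set z : ℕ → ℝ := fun n => (if n.Prime then Real.log n / n else 0) -
    (Real.log 2 * Nat.log 2 n - Real.log 2 * Nat.log 2 (n - 1))
  have hfz (n : ℕ) : primeRecipSubJump n = f n • z n := by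
    rw [primeRecipSubJump, harmonicLogJump_eq_inv_log_mul, smul_eq_mul]
    simp only [f, z]
    rw [mul_sub (Real.log _)⁻¹ (ite _ _ _)]
    congr 1
    split_ifs with hn
    · have : 0 < Real.log n := Real.log_pos (by exact_mod_cast hn.one_lt)
      rw [max_eq_left hn.two_le]
      field_simp
    · simp
  simp only [hfz]
  obtain ⟨C, hC⟩ := exists_abs_sum_log_div_prime_sub_log_le
  refine Antitone.cauchySeq_series_mul_of_tendsto_zero_of_bounded (b := C + Real.log 2) ?_ ?_ ?_
  · intro m n hmn
    have hm : (2 : ℝ) ≤ (max m 2 : ℕ) := by exact_mod_cast le_max_right m 2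
    have : 0 < Real.log (max m 2 : ℕ) := Real.log_pos (by linarith)
    have hle : ((max m 2 : ℕ) : ℝ) ≤ (max n 2 : ℕ) := by exact_mod_cast max_le_max_right 2 hmn
    exact inv_anti₀ this (Real.log_le_log (by linarith) hle)
  · refine tendsto_inv_atTop_zero.comp (Real.tendsto_log_atTop.comp ?_)
    exact tendsto_natCast_atTop_atTop.comp
      (tendsto_atTop_mono (fun n => le_max_left n 2) tendsto_id)
  · intro N
    have h2 : 0 < Real.log 2 := Real.log_pos (by norm_num)
    rcases N with _ | N
    · have := (abs_nonneg _).trans (hC 0)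
      simp; linarith
    · simp only [z]
      rw [Finset.sum_sub_distrib, Finset.sum_range_succ_ite_prime (fun n => Real.log n / n),
        Finset.sum_range_succ_sub_pred (fun n => Real.log 2 * (Nat.log 2 n : ℝ))]
      have e : ∑ p ∈ N.primesLE, Real.log p / p -
          (Real.log 2 * Nat.log 2 N - Real.log 2 * Nat.log 2 0) =
          (∑ p ∈ N.primesLE, Real.log p / p - Real.log N) -
          (Real.log 2 * Nat.log 2 N - Real.log N) := by simp
      rw [e, Real.norm_eq_abs]
      exact (abs_sub _ _).trans (add_le_add (hC N) (abs_log_two_mul_natLog_sub_log_le N))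

/-- **Abel's limit theorem** for general decreasing weights: if `∑ a n` converges to `K`, then so do
its weighted sums as the weights tend to `1`. -/
theorem tendsto_tsum_mul_of_antitone {ι : Type*} {l : Filter ι} {a : ℕ → ℝ} {w : ι → ℕ → ℝ} {K : ℝ}
    (ha : Tendsto (fun N => ∑ n ∈ Finset.range N, a n) atTop (nhds K))
    (hanti : ∀ᶠ i in l, Antitone (w i)) (hzero : ∀ᶠ i in l, Tendsto (w i) atTop (nhds 0))
    (hsum : ∀ᶠ i in l, Summable fun n => a n * w i n) (hw0 : ∀ i, w i 0 = 1)
    (hone : ∀ n, Tendsto (fun i => w i n) l (nhds 1)) :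
    Tendsto (fun i => ∑' n, a n * w i n) l (nhds K) := by
  set E : ℕ → ℝ := fun N => ∑ n ∈ Finset.range N, a n - K with hE
  have hE0 : Tendsto E atTop (nhds 0) := by simpa [hE] using ha.sub_const K
  have parts (i : ι) (N : ℕ) : ∑ n ∈ Finset.range N, a n * w i n =
      E N * w i N + K + ∑ n ∈ Finset.range N, E (n + 1) * (w i n - w i (n + 1)) := by
    induction N with
    | zero => simp [hE, hw0]
    | succ N ih =>
      rw [Finset.sum_range_succ, Finset.sum_range_succ, ih]
      have : E (N + 1) = E N + a N := by simp only [hE, Finset.sum_range_succ]; ring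
      rw [this]; ring
  rw [Metric.tendsto_nhds]
  intro δ hδ
  obtain ⟨M, hM⟩ := eventually_atTop.1 (Metric.tendsto_nhds.1 hE0 (δ / 2) (by positivity))
  have hfin : Tendsto (fun i => ∑ n ∈ Finset.range M, |E (n + 1)| * (w i n - w i (n + 1))) l
      (nhds (∑ n ∈ Finset.range M, |E (n + 1)| * (1 - 1))) :=
    tendsto_finsetSum _ fun n _ => ((hone n).sub (hone (n + 1))).const_mul _
  simp only [sub_self, mul_zero, Finset.sum_const_zero] at hfin
  filter_upwards [hanti, hzero, hsum, hfin.eventually_lt_const (half_pos hδ)]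
    with i hi hi0 his hiM
  have hstep (n : ℕ) : 0 ≤ w i n - w i (n + 1) := sub_nonneg.2 (hi n.le_succ)
  set S := ∑ n ∈ Finset.range M, |E (n + 1)| * (w i n - w i (n + 1))
  have hbound (N : ℕ) :
      |∑ n ∈ Finset.range N, a n * w i n - K - E N * w i N| ≤ S + δ / 2 * (1 - w i N) := by
    rw [parts, show ∀ x y z : ℝ, x + y + z - y - x = z by intros; ring]
    calc |∑ n ∈ Finset.range N, E (n + 1) * (w i n - w i (n + 1))|
        ≤ ∑ n ∈ Finset.range N, |E (n + 1)| * (w i n - w i (n + 1)) := by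
          refine (Finset.abs_sum_le_sum_abs _ _).trans_eq ?_
          exact Finset.sum_congr rfl fun n _ => by rw [abs_mul, abs_of_nonneg (hstep n)]
      _ ≤ ∑ n ∈ Finset.range N, ((if n < M then |E (n + 1)| * (w i n - w i (n + 1)) else 0)
            + δ / 2 * (w i n - w i (n + 1))) := by
          refine Finset.sum_le_sum fun n _ => ?_
          split_ifs with hn
          · have := mul_nonneg (half_pos hδ).le (hstep n)
            linarith
          · have := hM (n + 1) (by omega)
            rw [dist_zero_right, Real.norm_eq_abs] at this
            rw [zero_add]
            exact mul_le_mul_of_nonneg_right this.le (hstep n)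
      _ ≤ S + δ / 2 * (1 - w i N) := by
          rw [Finset.sum_add_distrib, ← Finset.mul_sum, Finset.sum_range_sub', hw0,
            ← Finset.sum_filter]
          gcongr
          refine Finset.sum_le_sum_of_subset_of_nonneg (fun n hn => by simp_all) fun n _ _ => ?_
          exact mul_nonneg (abs_nonneg _) (hstep n)
  have hlim : Tendsto (fun N => |∑ n ∈ Finset.range N, a n * w i n - K - E N * w i N|) atTop
      (nhds |∑' n, a n * w i n - K - 0 * 0|) :=
    ((his.hasSum.tendsto_sum_nat.sub_const K).sub (hE0.mul hi0)).abs
  have hlim2 : Tendsto (fun N => S + δ / 2 * (1 - w i N)) atTop (nhds (S + δ / 2 * (1 - 0))) :=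
    (((tendsto_const_nhds.sub hi0).const_mul _).const_add _)
  have := le_of_tendsto_of_tendsto' hlim hlim2 hbound
  rw [Real.dist_eq]
  simp only [mul_zero, sub_zero, mul_one] at this
  linarith

theorem hasSum_harmonicLogJump_mul {ε : ℝ} (hε : 0 < ε) :
    HasSum (fun n : ℕ => harmonicLogJump n * ((max n 1 : ℕ) : ℝ) ^ (-ε))
      (-Real.log (1 - 2 ^ (-ε))) := by
  have hx0 : (0 : ℝ) < 2 ^ (-ε) := by positivity
  have hx1 : (2 : ℝ) ^ (-ε) < 1 := Real.rpow_lt_one_of_one_lt_of_neg (by norm_num) (by linarith)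
  have h := Real.hasSum_pow_div_log_of_abs_lt_one (x := 2 ^ (-ε)) (by rwa [abs_of_pos hx0])
  have hinj : Function.Injective fun k : ℕ => 2 ^ (k + 1) := fun i j hij => by
    simpa using Nat.pow_right_injective le_rfl hij
  rw [← hinj.hasSum_iff]
  · refine h.congr_fun ?_
    intro k
    have h1 : harmonicLogJump (2 ^ (k + 1)) = ((k : ℝ) + 1)⁻¹ := by
      unfold harmonicLogJump
      rcases Nat.log_two_pred_eq_or (2 ^ (k + 1)) with h | ⟨h, -⟩
      · rw [Nat.log_pow (by norm_num)] at h
        have := Nat.pow_log_le_self 2 (x := 2 ^ (k + 1) - 1)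
          (by have : 0 < 2 ^ k := by positivity
              rw [pow_succ]; omega)
        rw [h] at this
        have : 0 < 2 ^ (k + 1) := by positivity
        omega
      · rw [Nat.log_pow (by norm_num)] at h ⊢
        rw [← Nat.add_right_cancel h, harmonic_succ]
        push_cast
        ring
    simp only [Function.comp_apply]
    rw [h1, max_eq_left Nat.one_le_two_pow]
    push_cast
    have h2 : ((2 : ℝ) ^ (k + 1)) ^ (-ε) = (2 ^ (-ε)) ^ (k + 1) := by
      rw [← Real.rpow_natCast, ← Real.rpow_natCast, ← Real.rpow_mul (by norm_num),
        ← Real.rpow_mul (by norm_num), mul_comm]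
    rw [h2]
    ring
  · intro n hn
    have : harmonicLogJump n = 0 := by
      unfold harmonicLogJump
      rcases Nat.log_two_pred_eq_or n with h | ⟨h, h'⟩
      · simp [h]
      · exact absurd ⟨_, (h ▸ h').symm⟩ hn
    rw [this, zero_mul]

/-- The second order part of `-log (1 - x)`. -/
noncomputable def negLogOneSubTail (x : ℝ) : ℝ := -Real.log (1 - x) - x

theorem negLogOneSubTail_nonneg {x : ℝ} (h1 : x ≤ 1 / 2) : 0 ≤ negLogOneSubTail x := by
  have := Real.log_le_sub_one_of_pos (show 0 < 1 - x by linarith)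
  unfold negLogOneSubTail
  linarith

theorem negLogOneSubTail_le {x : ℝ} (h1 : x ≤ 1 / 2) : negLogOneSubTail x ≤ 2 * x ^ 2 := by
  have h := Real.one_sub_inv_le_log_of_pos (show 0 < 1 - x by linarith)
  have : (1 - x)⁻¹ ≤ 1 + x + 2 * x ^ 2 := by
    rw [inv_le_iff_one_le_mul₀ (by linarith)]
    nlinarith [mul_nonneg (sq_nonneg x) (show 0 ≤ 1 - 2 * x by linarith)]
  unfold negLogOneSubTail
  linarith

theorem Nat.Prime.rpow_neg_le_half {p : ℕ} (hp : p.Prime) {s : ℝ} (hs : 1 ≤ s) :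
    (p : ℝ) ^ (-s) ≤ 1 / 2 := by
  have h2 : (2 : ℝ) ≤ p := by exact_mod_cast hp.two_le
  calc (p : ℝ) ^ (-s) ≤ (p : ℝ) ^ (-1 : ℝ) := by gcongr; linarith
    _ = (p : ℝ)⁻¹ := Real.rpow_neg_one _
    _ ≤ 1 / 2 := by rw [one_div]; gcongr

theorem norm_ite_prime_negLogOneSubTail_le {s : ℝ} (hs : 1 ≤ s) (n : ℕ) :
    ‖if n.Prime then negLogOneSubTail ((n : ℝ) ^ (-s)) else 0‖ ≤ 2 * (n : ℝ) ^ (-2 : ℝ) := by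
  split_ifs with hn
  · have h := hn.rpow_neg_le_half hs
    rw [Real.norm_of_nonneg (negLogOneSubTail_nonneg h)]
    refine (negLogOneSubTail_le h).trans ?_
    have : (1 : ℝ) ≤ n := by exact_mod_cast hn.one_le
    rw [← Real.rpow_natCast, ← Real.rpow_mul (by positivity)]
    gcongr
    push_cast; linarith
  · simp

theorem summable_two_mul_rpow_neg_two : Summable fun n : ℕ => 2 * (n : ℝ) ^ (-2 : ℝ) :=
  (Real.summable_nat_rpow.2 (by norm_num)).mul_left 2

theorem summable_ite_prime_negLogOneSubTail {s : ℝ} (hs : 1 ≤ s) :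
    Summable fun n : ℕ => if n.Prime then negLogOneSubTail ((n : ℝ) ^ (-s)) else 0 :=
  summable_two_mul_rpow_neg_two.of_norm_bounded (norm_ite_prime_negLogOneSubTail_le hs)

theorem tendsto_tsum_ite_prime_negLogOneSubTail :
    Tendsto (fun ε : ℝ => ∑' n : ℕ,
        if n.Prime then negLogOneSubTail ((n : ℝ) ^ (-(1 + ε))) else 0) (nhdsWithin 0 (Set.Ioi 0))
      (nhds (∑' n : ℕ, if n.Prime then negLogOneSubTail ((n : ℝ) ^ (-1 : ℝ)) else 0)) := by
  refine tendsto_tsum_of_dominated_convergence summable_two_mul_rpow_neg_two ?_ ?_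
  · intro n
    split_ifs with hn
    · have h0 : (0 : ℝ) < n := by exact_mod_cast hn.pos
      have h1 := hn.rpow_neg_le_half le_rfl
      have hc : ContinuousAt (fun ε : ℝ => negLogOneSubTail ((n : ℝ) ^ (-(1 + ε)))) 0 := by
        unfold negLogOneSubTail
        have : ContinuousAt (fun ε : ℝ => (n : ℝ) ^ (-(1 + ε))) 0 :=
          ContinuousAt.rpow continuousAt_const (by fun_prop) (Or.inl h0.ne')
        refine ((continuousAt_const.sub this).log ?_).neg.sub this
        simp only [Pi.sub_apply, add_zero]; linarith
      have := hc.tendsto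
      rw [add_zero] at this
      exact this.mono_left nhdsWithin_le_nhds
    · exact tendsto_const_nhds
  · filter_upwards [self_mem_nhdsWithin] with ε hε n
    exact norm_ite_prime_negLogOneSubTail_le (by linarith [Set.mem_Ioi.1 hε]) n

/-- The logarithm of the Euler product of the Riemann zeta function at a real `s > 1`. -/
theorem hasSum_ite_prime_neg_log_one_sub {s : ℝ} (hs : 1 < s) :
    HasSum (fun n : ℕ => if n.Prime then -Real.log (1 - (n : ℝ) ^ (-s)) else 0)
      (Real.log (∑' n : ℕ, 1 / (n : ℝ) ^ s)) := by
  let f : ℕ →*₀ ℝ :=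
    { toFun n := (n : ℝ) ^ (-s)
      map_zero' := by simp [Real.zero_rpow (show -s ≠ 0 by linarith)]
      map_one' := by simp
      map_mul' m n := by push_cast; exact Real.mul_rpow m.cast_nonneg n.cast_nonneg }
  have hf (n : ℕ) : f n = (n : ℝ) ^ (-s) := rfl
  have hsum : Summable (‖f ·‖) := by
    refine (Real.summable_nat_rpow.2 (show -s < -1 by linarith)).congr fun n => ?_
    rw [hf, Real.norm_of_nonneg (by positivity)]
  have hprod := EulerProduct.eulerProduct_completely_multiplicative hsum
  have hpos : 0 < ∑' n, f n :=
    hsum.of_norm.tsum_pos (fun n => by rw [hf]; positivity) 1 (by simp)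
  have htsum : ∑' n, f n = ∑' n : ℕ, 1 / (n : ℝ) ^ s :=
    tsum_congr fun n => by rw [hf, Real.rpow_neg n.cast_nonneg, one_div]
  have hlt {p : ℕ} (hp : p.Prime) : 0 < 1 - (p : ℝ) ^ (-s) := by
    linarith [hp.rpow_neg_le_half hs.le]
  rw [hasSum_iff_tendsto_nat_of_nonneg, ← htsum]
  · refine ((Real.continuousAt_log hpos.ne').tendsto.comp hprod).congr fun N => ?_
    simp only [Function.comp_apply]
    rw [Real.log_prod, Nat.primesBelow, Finset.sum_filter]
    · simp only [Real.log_inv, hf]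
    · intro p hp
      exact inv_ne_zero (hlt (Nat.prime_of_mem_primesBelow hp)).ne'
  · intro n
    split_ifs with hn
    · have : 0 ≤ (n : ℝ) ^ (-s) := by positivity
      have := Real.log_nonpos (hlt hn).le (by linarith)
      linarith
    · exact le_rfl

theorem rpow_max_one_mul_inv_eq {n : ℕ} (hn : n.Prime) (ε : ℝ) :
    (n : ℝ)⁻¹ * ((max n 1 : ℕ) : ℝ) ^ (-ε) = (n : ℝ) ^ (-(1 + ε)) := by
  have h0 : (0 : ℝ) < n := by exact_mod_cast hn.pos
  rw [max_eq_left hn.one_le, ← Real.rpow_neg_one, ← Real.rpow_add h0]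
  ring_nf

theorem hasSum_primeRecipSubJump_mul {ε : ℝ} (hε : 0 < ε) :
    HasSum (fun n : ℕ => primeRecipSubJump n * ((max n 1 : ℕ) : ℝ) ^ (-ε))
      (Real.log (∑' n : ℕ, 1 / (n : ℝ) ^ (1 + ε)) -
        (∑' n : ℕ, if n.Prime then negLogOneSubTail ((n : ℝ) ^ (-(1 + ε))) else 0) -
        -Real.log (1 - 2 ^ (-ε))) := by
  have hs : 1 < 1 + ε := by linarith
  refine (((hasSum_ite_prime_neg_log_one_sub hs).sub
    (summable_ite_prime_negLogOneSubTail hs.le).hasSum).sub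
      (hasSum_harmonicLogJump_mul hε)).congr_fun fun n => ?_
  rw [primeRecipSubJump, sub_mul]
  congr 1
  split_ifs with hn
  · rw [rpow_max_one_mul_inv_eq hn, negLogOneSubTail]
    ring
  · simp

theorem tendsto_one_sub_two_rpow_neg_div :
    Tendsto (fun ε : ℝ => (1 - (2 : ℝ) ^ (-ε)) / ε) (nhdsWithin 0 (Set.Ioi 0))
      (nhds (Real.log 2)) := by
  have h : HasDerivAt (fun ε : ℝ => -(2 : ℝ) ^ (-ε)) (Real.log 2) 0 := by
    have := (((hasDerivAt_id (0 : ℝ)).neg).const_rpow (a := 2) (by norm_num)).neg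
    exact this.congr_deriv (by simp)
  have := h.tendsto_slope_zero_right
  refine this.congr fun ε => ?_
  simp
  ring

theorem tendsto_log_tsum_add_log_one_sub :
    Tendsto (fun ε : ℝ => Real.log (∑' n : ℕ, 1 / (n : ℝ) ^ (1 + ε)) +
      Real.log (1 - 2 ^ (-ε))) (nhdsWithin 0 (Set.Ioi 0)) (nhds (Real.log (Real.log 2))) := by
  have hshift : Tendsto (fun ε : ℝ => 1 + ε) (nhdsWithin 0 (Set.Ioi 0))
      (nhdsWithin 1 (Set.Ioi 1)) := by
    refine tendsto_nhdsWithin_iff.2 ⟨?_, ?_⟩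
    · have : Tendsto (fun ε : ℝ => 1 + ε) (nhds 0) (nhds (1 + 0)) := tendsto_id.const_add 1
      rw [add_zero] at this
      exact this.mono_left nhdsWithin_le_nhds
    · filter_upwards [self_mem_nhdsWithin] with ε hε
      have := Set.mem_Ioi.1 hε
      exact Set.mem_Ioi.2 (by linarith)
  have hζ := tendsto_sub_mul_tsum_nat_rpow.comp hshift
  have h2 : 0 < Real.log 2 := Real.log_pos (by norm_num)
  have hmul := (hζ.mul tendsto_one_sub_two_rpow_neg_div).log (by simpa using h2.ne')
  rw [one_mul] at hmul
  refine hmul.congr' ?_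
  filter_upwards [self_mem_nhdsWithin, hζ.eventually_const_lt (show (0 : ℝ) < 1 by norm_num)]
    with ε hε hpos
  have hε : 0 < ε := hε
  simp only [Function.comp_apply, add_sub_cancel_left] at hpos ⊢
  have hx1 : (2 : ℝ) ^ (-ε) < 1 := Real.rpow_lt_one_of_one_lt_of_neg (by norm_num) (by linarith)
  rw [← Real.log_mul (pos_of_mul_pos_right hpos hε.le).ne' (by linarith)]
  congr 1
  field_simp

theorem tendsto_sum_primeRecipSubJump :
    Tendsto (fun N => ∑ n ∈ Finset.range N, primeRecipSubJump n) atTop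
      (nhds (Real.log (Real.log 2) -
        ∑' n : ℕ, if n.Prime then negLogOneSubTail ((n : ℝ) ^ (-1 : ℝ)) else 0)) := by
  obtain ⟨K, hK⟩ := cauchySeq_tendsto_of_complete cauchySeq_sum_primeRecipSubJump
  have hAbel : Tendsto (fun ε : ℝ => ∑' n : ℕ, primeRecipSubJump n * ((max n 1 : ℕ) : ℝ) ^ (-ε))
      (nhdsWithin 0 (Set.Ioi 0)) (nhds K) := by
    have hbase (n : ℕ) : (1 : ℝ) ≤ (max n 1 : ℕ) := by exact_mod_cast le_max_right n 1
    refine tendsto_tsum_mul_of_antitone hK ?_ ?_ ?_ (by simp) ?_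
    · filter_upwards [self_mem_nhdsWithin] with ε hε m n hmn
      refine Real.rpow_le_rpow_of_nonpos (by linarith [hbase m]) ?_
        (by linarith [Set.mem_Ioi.1 hε])
      exact_mod_cast max_le_max_right 1 hmn
    · filter_upwards [self_mem_nhdsWithin] with ε hε
      refine (tendsto_rpow_neg_atTop hε).comp (tendsto_natCast_atTop_atTop.comp ?_)
      exact tendsto_atTop_mono (fun n => le_max_left n 1) tendsto_id
    · filter_upwards [self_mem_nhdsWithin] with ε hε
      exact (hasSum_primeRecipSubJump_mul hε).summable
    · intro n
      have : ContinuousAt (fun ε : ℝ => ((max n 1 : ℕ) : ℝ) ^ (-ε)) 0 :=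
        ContinuousAt.rpow continuousAt_const (by fun_prop) (Or.inl (by linarith [hbase n]))
      have := this.tendsto
      rw [neg_zero, Real.rpow_zero] at this
      exact this.mono_left nhdsWithin_le_nhds
  have hval := tendsto_log_tsum_add_log_one_sub.sub tendsto_tsum_ite_prime_negLogOneSubTail
  have hAbel' := hAbel.congr' (f₂ := fun ε => Real.log (∑' n : ℕ, 1 / (n : ℝ) ^ (1 + ε)) +
      Real.log (1 - 2 ^ (-ε)) -
      ∑' n : ℕ, if n.Prime then negLogOneSubTail ((n : ℝ) ^ (-(1 + ε))) else 0) (by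
    filter_upwards [self_mem_nhdsWithin] with ε hε
    rw [(hasSum_primeRecipSubJump_mul hε).tsum_eq]
    ring)
  rwa [tendsto_nhds_unique hAbel' hval] at hK

theorem tendsto_natLog_two_atTop : Tendsto (Nat.log 2) atTop atTop :=
  tendsto_atTop_atTop.2 fun k => ⟨2 ^ k, fun n hn =>
    (Nat.le_log_iff_pow_le (by norm_num) (by have : 0 < 2 ^ k := by positivity
                                             omega)).2 hn⟩

theorem tendsto_log_natLog_two_sub :
    Tendsto (fun N : ℕ => Real.log (Nat.log 2 N) - Real.log (Real.log N)) atTop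
      (nhds (-Real.log (Real.log 2))) := by
  have h2 : 0 < Real.log 2 := Real.log_pos (by norm_num)
  have hlogN : Tendsto (fun N : ℕ => Real.log N) atTop atTop :=
    Real.tendsto_log_atTop.comp tendsto_natCast_atTop_atTop
  have hratio : Tendsto (fun N : ℕ => (Nat.log 2 N : ℝ) / Real.log N) atTop
      (nhds (Real.log 2)⁻¹) := by
    have hsmall : Tendsto (fun N : ℕ => (Real.log 2 * Nat.log 2 N - Real.log N) / Real.log N) atTop
        (nhds 0) := by
      refine squeeze_zero_norm (a := fun N : ℕ => Real.log 2 / Real.log N) (fun N => ?_)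
        (tendsto_const_nhds.div_atTop hlogN)
      rw [norm_div, Real.norm_eq_abs, Real.norm_of_nonneg (Real.log_natCast_nonneg N)]
      exact div_le_div_of_nonneg_right (abs_log_two_mul_natLog_sub_log_le N)
        (Real.log_natCast_nonneg N)
    have := (hsmall.add_const 1).const_mul (Real.log 2)⁻¹
    rw [zero_add, mul_one] at this
    refine this.congr' ?_
    filter_upwards [hlogN.eventually_gt_atTop 0] with N hN
    field_simp
    ring
  have := hratio.log (inv_ne_zero h2.ne')
  rw [Real.log_inv] at this
  refine this.congr' ?_
  filter_upwards [hlogN.eventually_gt_atTop 0, tendsto_natLog_two_atTop.eventually_gt_atTop 0]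
    with N hN hL
  exact Real.log_div (by positivity) (ne_of_gt hN)

/-- **Mertens' third theorem**, in logarithmic form. -/
theorem tendsto_sum_neg_log_one_sub_inv_prime_sub_log_log :
    Tendsto (fun N : ℕ => ∑ p ∈ N.primesLE, -Real.log (1 - (p : ℝ)⁻¹) - Real.log (Real.log N))
      atTop (nhds Real.eulerMascheroniConstant) := by
  have h1 := tendsto_sum_primeRecipSubJump.comp (tendsto_add_atTop_nat 1)
  have h2 := (summable_ite_prime_negLogOneSubTail le_rfl).hasSum.tendsto_sum_nat.comp
    (tendsto_add_atTop_nat 1)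
  have h3 := Real.tendsto_harmonic_sub_log.comp tendsto_natLog_two_atTop
  have h := ((h1.add h2).add h3).add tendsto_log_natLog_two_sub
  rw [show ∀ x y z : ℝ, x - y + y + z + -x = z by intros; ring] at h
  refine h.congr fun N => ?_
  simp only [Function.comp_apply]
  rw [sum_range_primeRecipSubJump, Finset.sum_range_succ_ite_prime
    (fun n => negLogOneSubTail ((n : ℝ) ^ (-1 : ℝ)))]
  simp only [negLogOneSubTail, Real.rpow_neg_one, Finset.sum_sub_distrib]
  ring

/-- **Mertens' third theorem**. -/
theorem tendsto_prod_one_sub_inv_prime_mul_log :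
    Tendsto (fun N : ℕ => (∏ p ∈ N.primesLE, (1 - (p : ℝ)⁻¹)) * Real.log N)
      atTop (nhds (Real.exp (-Real.eulerMascheroniConstant))) := by
  refine (Real.continuous_exp.tendsto _).comp
    tendsto_sum_neg_log_one_sub_inv_prime_sub_log_log.neg |>.congr' ?_
  filter_upwards [eventually_gt_atTop 1] with N hN
  have hlog : 0 < Real.log N := Real.log_pos (by exact_mod_cast hN)
  rw [Function.comp_apply, Finset.sum_neg_distrib, neg_sub, sub_neg_eq_add, add_comm,
    Real.exp_add, Real.exp_log hlog, Real.exp_sum]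
  congr 1
  refine Finset.prod_congr rfl fun p hp => Real.exp_log ?_
  rw [sub_pos]
  exact inv_lt_one_of_one_lt₀ (by exact_mod_cast Nat.one_lt_of_mem_primesLE hp)

theorem totient_primorial_div (n : ℕ) :
    ((primorial n).totient : ℝ) / primorial n = ∏ p ∈ n.primesLE, (1 - (p : ℝ)⁻¹) := by
  have h := congrArg (Rat.cast : ℚ → ℝ) (Nat.totient_eq_mul_prod_factors (primorial n))
  rw [primeFactors_primorial] at h
  push_cast at h
  have : (primorial n : ℝ) ≠ 0 := by exact_mod_cast primorial_ne_zero n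
  rw [h]
  field_simp

theorem card_filter_coprime_Ico_mul (a n k : ℕ) :
    ((Finset.Ico n (n + a * k)).filter a.Coprime).card = k * a.totient := by
  induction k with
  | zero => simp
  | succ k ih =>
    rw [← Finset.Ico_union_Ico_eq_Ico (b := n + a * k) (by omega) (by rw [mul_add]; omega),
      Finset.filter_union, Finset.card_union_of_disjoint, ih, mul_add, mul_one, ← add_assoc,
      Nat.filter_coprime_Ico_eq_totient]
    · ring
    · exact Finset.disjoint_filter_filter (Finset.Ico_disjoint_Ico_consecutive _ _ _)

theorem natCard_inter_Icc_le (A : Set ℤ) (x : ℕ) :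
    Nat.card (A ∩ Set.Icc 1 (x : ℤ) : Set ℤ) ≤ x := by
  rw [Nat.card_coe_set_eq]
  calc (A ∩ Set.Icc 1 (x : ℤ)).ncard ≤ (Set.Icc 1 (x : ℤ)).ncard :=
        Set.ncard_le_ncard Set.inter_subset_right (Set.finite_Icc _ _)
    _ = x := by rw [← Finset.coe_Icc, Set.ncard_coe_finset]; simp

theorem isCoboundedUnder_ge_natCard_div (A : Set ℤ) :
    IsCoboundedUnder (· ≥ ·) atTop
      (fun x : ℕ => (Nat.card (A ∩ Set.Icc 1 (x : ℤ) : Set ℤ) : ℝ) / x) :=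
  (isBoundedUnder_of ⟨1, fun x => div_le_one_of_le₀
    (by exact_mod_cast natCard_inter_Icc_le A x) x.cast_nonneg⟩ :
      IsBoundedUnder (· ≤ ·) atTop _).isCoboundedUnder_ge

theorem isBoundedUnder_ge_natCard_div (A : Set ℤ) :
    IsBoundedUnder (· ≥ ·) atTop
      (fun x : ℕ => (Nat.card (A ∩ Set.Icc 1 (x : ℤ) : Set ℤ) : ℝ) / x) :=
  isBoundedUnder_of ⟨0, fun x => by positivity⟩

theorem lowerDensity_nonneg (A : Set ℤ) : 0 ≤ lowerDensity A :=
  le_liminf_of_le (isCoboundedUnder_ge_natCard_div A) (Eventually.of_forall fun x => by positivity)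

theorem exists_forall_ne_of_card_lt {p : ℕ} [NeZero p] {s : Finset ℤ} (h : s.card < p) :
    ∃ r : ZMod p, ∀ b ∈ s, (b : ZMod p) ≠ r := by
  classical
  have hcard : (s.image (Int.cast : ℤ → ZMod p)).card < Fintype.card (ZMod p) := by
    rw [ZMod.card]; exact Finset.card_image_le.trans_lt h
  obtain ⟨r, hr⟩ := Finset.exists_mem_notMem_of_card_lt_card
    (s := s.image (Int.cast : ℤ → ZMod p)) (t := Finset.univ) hcard
  exact ⟨r, fun b hb hbr => hr.2 (Finset.mem_image.2 ⟨b, hb, hbr⟩)⟩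

/-- One integer `-c` may be chosen to avoid an admissible set modulo all small primes at once. -/
theorem AdmissibleSet.exists_nat_neg_ne {B : Set ℤ} (hB : AdmissibleSet B) (n : ℕ) :
    ∃ c : ℕ, ∀ p ∈ n.primesLE, ∀ b ∈ B, (b : ZMod p) ≠ -(c : ZMod p) := by
  classical
  choose r hr using hB
  obtain ⟨c, hc⟩ := Nat.chineseRemainderOfFinset
    (fun p => if hp : p.Prime then (-(r p hp)).val else 0) id n.primesLE
    (fun p hp => (Nat.prime_of_mem_primesLE hp).ne_zero)
    (fun p hp q hq hpq => (Nat.coprime_primes (Nat.prime_of_mem_primesLE hp)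
      (Nat.prime_of_mem_primesLE hq)).2 hpq)
  refine ⟨c, fun p hp b hb => ?_⟩
  have hp' := Nat.prime_of_mem_primesLE hp
  have : NeZero p := ⟨hp'.ne_zero⟩
  have h := hc p hp
  rw [dif_pos hp', id, ← ZMod.natCast_eq_natCast_iff, ZMod.natCast_zmod_val] at h
  rw [h, neg_neg]
  exact hr p hp' b hb

theorem admissibleSet_insert_of_coprime {B : Finset ℤ} {c : ℕ}
    (hc : ∀ p ∈ (B.card + 1).primesLE, ∀ b ∈ B, (b : ZMod p) ≠ -(c : ZMod p))
    {u : ℕ} (hu : (primorial (B.card + 1)).Coprime u) :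
    AdmissibleSet (insert ((u : ℤ) - c) (B : Set ℤ)) := by
  classical
  intro p hp
  have : NeZero p := ⟨hp.ne_zero⟩
  rcases le_or_gt p (B.card + 1) with h | h
  · have hmem := Nat.mem_primesLE.2 ⟨h, hp⟩
    refine ⟨-(c : ZMod p), ?_⟩
    rintro b (rfl | hb)
    · push_cast
      intro h0
      have h1 : (u : ZMod p) = 0 := by linear_combination h0
      rw [ZMod.natCast_eq_zero_iff] at h1
      have h2 : p ∣ primorial (B.card + 1) := by
        rw [primorial_eq_prod_primesLE]; exact Finset.dvd_prod_of_mem _ hmem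
      exact hp.one_lt.ne' (Nat.eq_one_of_dvd_coprimes hu h2 h1)
    · exact hc p hmem b hb
  · obtain ⟨r, hr⟩ := exists_forall_ne_of_card_lt
      (s := insert ((u : ℤ) - c) B) ((Finset.card_insert_le _ _).trans_lt h)
    exact ⟨r, fun b hb => hr b (by simpa using hb)⟩

theorem card_filter_Icc_sub_le (A : Set ℤ) [DecidablePred (· ∈ A)] (b : ℤ) (x : ℕ) :
    ((Finset.Icc (1 - b) (x - b)).filter (· ∈ A)).card ≤
      ((Finset.Icc 1 (x : ℤ)).filter (· ∈ A)).card + b.natAbs := by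
  have hsub : (Finset.Icc (1 - b) (x - b)).filter (· ∈ A) ⊆
      (Finset.Icc 1 (x : ℤ)).filter (· ∈ A) ∪ (Finset.Icc (1 - b) 0 ∪ Finset.Icc (x + 1) (x - b)) := by
    intro a ha
    simp only [Finset.mem_filter, Finset.mem_union, Finset.mem_Icc] at ha ⊢
    by_cases h : 1 ≤ a ∧ a ≤ x
    · exact Or.inl ⟨h, ha.2⟩
    · right; omega
  refine (Finset.card_le_card hsub).trans ((Finset.card_union_le _ _).trans ?_)
  gcongr
  refine (Finset.card_union_le _ _).trans ?_
  simp only [Int.card_Icc]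
  omega

theorem prod_div_le_lowerDensity {B : Finset ℤ} {A : Set ℤ} (hpos : 0 < B.card)
    (hadm : AdmissibleSet ↑B)
    (hA : ∀ t : ℤ, t ∉ B → AdmissibleSet (insert t (B : Set ℤ)) → ∃ b ∈ B, t - b ∈ A) :
    (∏ p ∈ (B.card + 1).primesLE, (1 - (p : ℝ)⁻¹)) / B.card ≤ lowerDensity A := by
  classical
  obtain ⟨c, hc⟩ := hadm.exists_nat_neg_ne (B.card + 1)
  set ℓ := B.card
  set P := primorial (ℓ + 1)
  have hP : 0 < P := primorial_pos _
  set M := ∑ b ∈ B, b.natAbs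
  set F : ℕ → Finset ℤ := fun x => (Finset.Icc 1 (x : ℤ)).filter (· ∈ A)
  have hF (x : ℕ) : Nat.card (A ∩ Set.Icc 1 (x : ℤ) : Set ℤ) = (F x).card := by
    rw [Nat.card_coe_set_eq, ← Set.ncard_coe_finset]
    congr 1
    ext a
    simp only [F, Finset.coe_filter, Finset.mem_Icc, Set.mem_inter_iff, Set.mem_Icc,
      Set.mem_ofPred_eq]
    tauto
  have hcount (x : ℕ) : x / P * P.totient ≤ ℓ + (ℓ * (F x).card + M) := by
    set U := (Finset.Ico (c + 1) (c + 1 + P * (x / P))).filter P.Coprime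
    have hU : U.image (fun u : ℕ => (u : ℤ) - c) ⊆ B ∪ B.biUnion fun b =>
        ((Finset.Icc (1 - b) (x - b)).filter (· ∈ A)).image (· + b) := by
      intro t ht
      obtain ⟨u, hu, rfl⟩ := Finset.mem_image.1 ht
      simp only [U, Finset.mem_filter, Finset.mem_Ico] at hu
      have hx := Nat.mul_div_le x P
      by_cases hB : (u : ℤ) - c ∈ B
      · exact Finset.mem_union_left _ hB
      · obtain ⟨b, hb, hbA⟩ := hA _ hB (admissibleSet_insert_of_coprime hc hu.2)
        refine Finset.mem_union_right _ (Finset.mem_biUnion.2 ⟨b, hb, Finset.mem_image.2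
          ⟨_, Finset.mem_filter.2 ⟨Finset.mem_Icc.2 ?_, hbA⟩, by ring⟩⟩)
        omega
    calc x / P * P.totient = U.card := (card_filter_coprime_Ico_mul P (c + 1) (x / P)).symm
      _ = (U.image fun u : ℕ => (u : ℤ) - c).card :=
          (Finset.card_image_of_injective _ fun u v h => by simpa using h).symm
      _ ≤ _ := Finset.card_le_card hU
      _ ≤ ℓ + ∑ b ∈ B, ((F x).card + b.natAbs) := by
          refine (Finset.card_union_le _ _).trans (add_le_add le_rfl ?_)
          refine Finset.card_biUnion_le.trans (Finset.sum_le_sum fun b _ => ?_)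
          exact Finset.card_image_le.trans (card_filter_Icc_sub_le A b x)
      _ = _ := by rw [Finset.sum_add_distrib, Finset.sum_const, smul_eq_mul]
  have hℓ : (0 : ℝ) < ℓ := by exact_mod_cast hpos
  have hP' : (0 : ℝ) < P := by exact_mod_cast hP
  set C : ℝ := (P.totient + ℓ + M) / ℓ
  rw [← totient_primorial_div]
  have hlim : Tendsto (fun x : ℕ => (P.totient : ℝ) / P / ℓ - C / x) atTop
      (nhds ((P.totient : ℝ) / P / ℓ - 0)) :=
    tendsto_const_nhds.sub (tendsto_const_nhds.div_atTop tendsto_natCast_atTop_atTop)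
  rw [sub_zero] at hlim
  rw [← hlim.liminf_eq]
  refine liminf_le_liminf ?_ hlim.isBoundedUnder_ge (isCoboundedUnder_ge_natCard_div A)
  filter_upwards [eventually_gt_atTop 0] with x hx
  have hx' : (0 : ℝ) < x := by exact_mod_cast hx
  rw [hF, le_div_iff₀ hx', sub_mul, div_mul_cancel₀ _ hx'.ne']
  have h1 : (x : ℝ) / P - 1 ≤ (x / P : ℕ) := by
    rw [← Nat.floor_div_eq_div (K := ℝ)]
    linarith [Nat.lt_floor_add_one ((x : ℝ) / P)]
  have h2 : ((x / P : ℕ) : ℝ) * P.totient ≤ ℓ + (ℓ * (F x).card + M) := by exact_mod_cast hcount x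
  have h3 : ((x : ℝ) / P - 1) * P.totient ≤ ℓ + (ℓ * (F x).card + M) :=
    (mul_le_mul_of_nonneg_right h1 (Nat.cast_nonneg _)).trans h2
  have e : (P.totient : ℝ) / P / ℓ * x - C = (((x : ℝ) / P - 1) * P.totient - ℓ - M) / ℓ := by
    simp only [C]; field_simp; ring
  rw [e, div_le_iff₀ hℓ]
  linarith

theorem exists_int_prime_residues (ℓ j : ℕ) (hj : 0 < j) :
    ∃ b : ℤ, 0 < b ∧ ∀ p ∈ ℓ.primesLE, (b : ZMod p) ≠ 0 ∧ (¬ p ∣ j → (b : ZMod p) = j) := by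
  set s := ℓ.primesLE.filter (¬ · ∣ j)
  refine ⟨(j + ∏ q ∈ s, q : ℕ), by positivity, fun p hp => ?_⟩
  have hp' := Nat.prime_of_mem_primesLE hp
  have h (hpj : ¬ p ∣ j) : ((∏ q ∈ s, q : ℕ) : ZMod p) = 0 := by
    rw [ZMod.natCast_eq_zero_iff]
    exact Finset.dvd_prod_of_mem _ (Finset.mem_filter.2 ⟨hp, hpj⟩)
  rw [Int.cast_natCast, Nat.cast_add]
  refine ⟨fun h0 => ?_, fun hpj => by rw [h hpj, add_zero]⟩
  by_cases hpj : p ∣ j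
  · rw [(ZMod.natCast_eq_zero_iff j p).2 hpj, zero_add, ZMod.natCast_eq_zero_iff,
      hp'.prime.dvd_finsetProd_iff] at h0
    obtain ⟨q, hq, hpq⟩ := h0
    rw [Finset.mem_filter] at hq
    rw [(Nat.prime_dvd_prime_iff_eq hp' (Nat.prime_of_mem_primesLE hq.1)).1 hpq] at hpj
    exact hq.2 hpj
  · rw [h hpj, add_zero, ZMod.natCast_eq_zero_iff] at h0
    exact hpj h0

/-- An admissible set of `ℓ` integers that meets every nonzero class modulo every prime `p ≤ y`,
and most of whose elements form an arithmetic progression. -/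
theorem exists_admissibleSet_progression {y ℓ : ℕ} (hy : y < ℓ) :
    ∃ (m : ℕ) (B : Finset ℤ), ℓ - y ≤ m ∧ B.card = ℓ ∧ AdmissibleSet ↑B ∧
      (∀ k < m, 1 - (primorial ℓ : ℤ) * (k + 1) ∈ B) ∧
      ∀ t : ℤ, AdmissibleSet (insert t (B : Set ℤ)) → ∀ p ∈ y.primesLE, ¬ (p : ℤ) ∣ t := by
  classical
  choose b hbpos hb using fun j : ℕ => exists_int_prime_residues ℓ (j + 1) j.succ_pos
  set C := (Finset.range y).image b
  have hC : C.card ≤ y := Finset.card_image_le.trans (Finset.card_range y).le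
  set P := primorial ℓ
  have hP : (0 : ℤ) < P := by exact_mod_cast primorial_pos ℓ
  set D := (Finset.range (ℓ - C.card)).image fun k : ℕ => 1 - (P : ℤ) * (k + 1)
  have hD : D.card = ℓ - C.card := by
    rw [Finset.card_image_of_injective, Finset.card_range]
    intro k k' h
    have h' := mul_left_cancel₀ hP.ne' (sub_right_injective h)
    exact_mod_cast add_right_cancel h'
  have hdisj : Disjoint D C := by
    rw [Finset.disjoint_left]
    intro a haD haC
    obtain ⟨k, -, rfl⟩ := Finset.mem_image.1 haD
    obtain ⟨j, -, hj⟩ := Finset.mem_image.1 haC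
    have := hbpos j
    nlinarith
  have hcard : (D ∪ C).card = ℓ := by
    rw [Finset.card_union_of_disjoint hdisj, hD]
    omega
  have hzero (p : ℕ) (hp : p ∈ ℓ.primesLE) : ∀ a ∈ D ∪ C, (a : ZMod p) ≠ 0 := by
    have hp' : Fact p.Prime := ⟨Nat.prime_of_mem_primesLE hp⟩
    intro a ha
    rcases Finset.mem_union.1 ha with ha | ha
    · obtain ⟨k, -, rfl⟩ := Finset.mem_image.1 ha
      have : (P : ZMod p) = 0 := by
        rw [ZMod.natCast_eq_zero_iff, show P = ∏ p ∈ ℓ.primesLE, p from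
          primorial_eq_prod_primesLE ..]
        exact Finset.dvd_prod_of_mem _ hp
      simp [this]
    · obtain ⟨j, -, rfl⟩ := Finset.mem_image.1 ha
      exact (hb j p hp).1
  refine ⟨ℓ - C.card, D ∪ C, by omega, hcard, fun p hp => ?_, fun k hk =>
    Finset.mem_union_left _ (Finset.mem_image_of_mem _ (Finset.mem_range.2 hk)),
    fun t ht p hp hpt => ?_⟩
  · rcases le_or_gt p ℓ with h | h
    · exact ⟨0, hzero p (Nat.mem_primesLE.2 ⟨h, hp⟩)⟩
    · have : NeZero p := ⟨hp.ne_zero⟩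
      exact exists_forall_ne_of_card_lt (hcard.trans_lt h)
  · rw [Nat.mem_primesLE] at hp
    have hp' : NeZero p := ⟨hp.2.ne_zero⟩
    obtain ⟨r, hr⟩ := ht p hp.2
    have hr0 : r ≠ 0 := fun h0 =>
      hr t (Set.mem_insert _ _) (by rw [h0, ZMod.intCast_zmod_eq_zero_iff_dvd]; exact hpt)
    have hval : 0 < r.val := Nat.pos_of_ne_zero ((ZMod.val_ne_zero r).2 hr0)
    have hlt := ZMod.val_lt r
    have hbr := (hb (r.val - 1) p (Nat.mem_primesLE.2 ⟨by omega, hp.2⟩)).2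
    rw [Nat.sub_add_cancel hval, ZMod.natCast_zmod_val] at hbr
    refine hr (b (r.val - 1)) (Set.mem_insert_of_mem _ ?_) (hbr (Nat.not_dvd_of_pos_of_lt hval hlt))
    exact Finset.mem_union_right _ (Finset.mem_image_of_mem _ (Finset.mem_range.2 (by omega)))

theorem lowerDensity_coprime_block_le {P Q m : ℕ} (hP : 0 < P) (hm : 0 < m) (hQP : Q ∣ P) :
    lowerDensity {a : ℤ | IsCoprime (Q : ℤ) (a + 1) ∧ (a / P) % m = 0} ≤
      (Q.totient : ℝ) / Q / m := by
  classical
  set A : Set ℤ := {a : ℤ | IsCoprime (Q : ℤ) (a + 1) ∧ (a / P) % m = 0}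
  have hQ : 0 < Q := Nat.pos_of_dvd_of_pos hQP hP
  have hcount (j : ℕ) : Nat.card (A ∩ Set.Icc 1 ((P * m * j : ℕ) : ℤ) : Set ℤ) ≤
      (j + 1) * (P / Q * Q.totient) := by
    set U : Finset ℕ := (Finset.range (j + 1)).biUnion fun i =>
      (Finset.Ico (P * m * i + 1) (P * m * i + 1 + Q * (P / Q))).filter Q.Coprime
    have hsub : A ∩ Set.Icc 1 ((P * m * j : ℕ) : ℤ) ⊆ U.image fun u : ℕ => (u : ℤ) - 1 := by
      rintro a ⟨⟨hcop, hmod⟩, h1, h2⟩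
      lift a to ℕ using by omega
      norm_cast at hcop hmod h1 h2
      obtain ⟨i, hi⟩ := Nat.dvd_of_mod_eq_zero hmod
      have hlo : P * (a / P) ≤ a := Nat.mul_div_le a P
      have hhi : a < P * (a / P) + P := Nat.lt_mul_div_succ a hP
      rw [hi, ← mul_assoc] at hlo hhi
      have hij : i ≤ j := Nat.le_of_mul_le_mul_left (hlo.trans h2) (by positivity)
      refine Finset.mem_coe.2 (Finset.mem_image.2 ⟨a + 1, Finset.mem_biUnion.2
        ⟨i, Finset.mem_range.2 (by omega), Finset.mem_filter.2 ⟨Finset.mem_Ico.2 ?_, hcop⟩⟩, ?_⟩)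
      · rw [Nat.mul_div_cancel' hQP]; omega
      · push_cast; ring
    rw [Nat.card_coe_set_eq]
    calc _ ≤ (U.image fun u : ℕ => (u : ℤ) - 1).card := by
          rw [← Set.ncard_coe_finset]
          exact Set.ncard_le_ncard hsub (Finset.finite_toSet _)
      _ ≤ U.card := Finset.card_image_le
      _ ≤ ∑ i ∈ Finset.range (j + 1), P / Q * Q.totient :=
          Finset.card_biUnion_le.trans (Finset.sum_le_sum fun i _ =>
            (card_filter_coprime_Ico_mul _ _ _).le)
      _ = _ := by simp
  have hQ' : (0 : ℝ) < Q := by exact_mod_cast hQ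
  have hP' : (0 : ℝ) < P := by exact_mod_cast hP
  have hm' : (0 : ℝ) < m := by exact_mod_cast hm
  set d : ℝ := (Q.totient : ℝ) / Q / m with hd
  refine le_of_forall_pos_le_add fun δ hδ => ?_
  refine liminf_le_of_frequently_le ?_ (isBoundedUnder_ge_natCard_div A)
  have hg : Tendsto (fun j : ℕ => P * m * j) atTop atTop :=
    tendsto_id.const_mul_atTop' (by positivity)
  refine hg.frequently (Eventually.frequently ?_)
  have hlim : Tendsto (fun j : ℕ => d + d / j) atTop (nhds (d + 0)) :=
    tendsto_const_nhds.add (tendsto_const_nhds.div_atTop tendsto_natCast_atTop_atTop)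
  filter_upwards [hlim.eventually_le_const (show d + 0 < d + δ by linarith),
    eventually_gt_atTop 0] with j hj hj0
  have hj0' : (0 : ℝ) < j := by exact_mod_cast hj0
  refine le_trans ?_ hj
  have h := (Nat.cast_le (α := ℝ)).2 (hcount j)
  rw [Nat.cast_mul (j + 1), Nat.cast_mul (P / Q), Nat.cast_div hQP hQ'.ne'] at h
  rw [div_le_iff₀ (by positivity)]
  refine h.trans_eq ?_
  rw [hd]
  push_cast
  field_simp

theorem isCoprime_primorial_of_forall_not_dvd {y : ℕ} {t : ℤ}
    (h : ∀ p ∈ y.primesLE, ¬ (p : ℤ) ∣ t) : IsCoprime (primorial y : ℤ) t := by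
  rw [primorial_eq_prod_primesLE, Nat.cast_prod]
  exact IsCoprime.prod_left fun p hp =>
    (Nat.prime_iff_prime_int.1 (Nat.prime_of_mem_primesLE hp)).coprime_iff_not_dvd.2 (h p hp)

theorem exists_covering_lowerDensity_le {y ℓ : ℕ} (hy : y < ℓ) :
    ∃ (B : Finset ℤ) (A : Set ℤ), B.card = ℓ ∧ AdmissibleSet ↑B ∧
      (∀ t : ℤ, t ∉ B → AdmissibleSet (insert t (B : Set ℤ)) → ∃ b ∈ B, t - b ∈ A) ∧
      lowerDensity A ≤ (∏ p ∈ y.primesLE, (1 - (p : ℝ)⁻¹)) / (ℓ - y) := by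
  obtain ⟨m, B, hm, hcard, hadm, hprog, hcop⟩ := exists_admissibleSet_progression hy
  have hm0 : 0 < m := by omega
  have hP : 0 < primorial ℓ := primorial_pos ℓ
  have hdvd : primorial y ∣ primorial ℓ := primorial_dvd_primorial hy.le
  refine ⟨B, _, hcard, hadm, fun t _ ht => ?_,
    (lowerDensity_coprime_block_le hP hm0 hdvd).trans ?_⟩
  · have hm0' : (0 : ℤ) < m := by exact_mod_cast hm0
    have hP' : (0 : ℤ) < primorial ℓ := by exact_mod_cast hP
    set q : ℤ := (t - 1) / primorial ℓ
    obtain ⟨k, hk⟩ := Int.eq_ofNat_of_zero_le (Int.emod_nonneg (-q - 1) hm0'.ne')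
    have hkm : k < m := by
      have := Int.emod_lt_of_pos (-q - 1) hm0'
      omega
    refine ⟨_, hprog k hkm, ?_, ?_⟩
    · have e : t - (1 - (primorial ℓ : ℤ) * (k + 1)) + 1 = t + primorial ℓ * (k + 1) := by ring
      rw [e]
      obtain ⟨c, hc⟩ := hdvd
      rw [hc, Nat.cast_mul, mul_assoc, IsCoprime.add_mul_left_right_iff]
      exact isCoprime_primorial_of_forall_not_dvd (hcop t ht)
    · have e : t - (1 - (primorial ℓ : ℤ) * (k + 1)) = t - 1 + primorial ℓ * (k + 1) := by ring
      rw [e, Int.add_mul_ediv_left _ _ hP'.ne']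
      refine Int.emod_eq_zero_of_dvd ?_
      have h := Int.dvd_self_sub_emod (x := -q - 1) (m := m)
      rw [hk] at h
      have e' : q + ((k : ℤ) + 1) = -(-q - 1 - k) := by ring
      rw [e', dvd_neg]
      exact h
  · rw [totient_primorial_div]
    have h1 : ((ℓ : ℝ) - y) ≤ m := by
      rw [sub_le_iff_le_add]; exact_mod_cast (by omega : ℓ ≤ m + y)
    have h2 : (0 : ℝ) < ℓ - y := sub_pos.2 (by exact_mod_cast hy)
    refine div_le_div_of_nonneg_left (Finset.prod_nonneg fun p hp => sub_nonneg.2 ?_) h2 h1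
    exact inv_le_one_of_one_le₀ (by exact_mod_cast (Nat.prime_of_mem_primesLE hp).one_lt.le)

theorem eta_le {y ℓ : ℕ} (hy : y < ℓ) :
    eta ℓ ≤ (∏ p ∈ y.primesLE, (1 - (p : ℝ)⁻¹)) / (ℓ - y) := by
  obtain ⟨B, A, hcard, hadm, hA, hle⟩ := exists_covering_lowerDensity_le hy
  refine le_trans (csInf_le ?_ ⟨B, A, hcard, hadm, hA, rfl⟩) hle
  refine ⟨0, ?_⟩
  rintro _ ⟨-, A, -, -, -, rfl⟩
  exact lowerDensity_nonneg A

theorem le_eta {ℓ : ℕ} (hℓ : 0 < ℓ) :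
    (∏ p ∈ (ℓ + 1).primesLE, (1 - (p : ℝ)⁻¹)) / ℓ ≤ eta ℓ := by
  obtain ⟨B, A, hcard, hadm, hA, -⟩ := exists_covering_lowerDensity_le hℓ
  refine le_csInf ⟨_, B, A, hcard, hadm, hA, rfl⟩ ?_
  rintro _ ⟨B, A, rfl, hadm, hA, rfl⟩
  exact prod_div_le_lowerDensity hℓ hadm hA

theorem tendsto_log_add_one_div_log :
    Tendsto (fun ℓ : ℕ => Real.log ℓ / Real.log (ℓ + 1 : ℕ)) atTop (nhds 1) := by
  have hlog : Tendsto (fun ℓ : ℕ => Real.log ℓ) atTop atTop :=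
    Real.tendsto_log_atTop.comp tendsto_natCast_atTop_atTop
  have h1 : Tendsto (fun ℓ : ℕ => 1 + Real.log (1 + 1 / (ℓ : ℝ)) / Real.log ℓ) atTop
      (nhds (1 + 0)) := by
    refine tendsto_const_nhds.add (Tendsto.div_atTop (a := Real.log (1 + 0)) ?_ hlog)
    exact (Real.continuousAt_log (by norm_num)).tendsto.comp
      (tendsto_const_nhds.add tendsto_one_div_atTop_nhds_zero_nat)
  rw [add_zero] at h1
  have h2 := h1.inv₀ one_ne_zero
  rw [inv_one] at h2
  refine h2.congr' ?_
  filter_upwards [eventually_gt_atTop 1] with ℓ hℓ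
  have hℓ' : (1 : ℝ) < ℓ := by exact_mod_cast hℓ
  have hl : 0 < Real.log ℓ := Real.log_pos hℓ'
  have e : ((ℓ + 1 : ℕ) : ℝ) = ℓ * (1 + 1 / ℓ) := by push_cast; field_simp
  rw [e, Real.log_mul (by positivity) (by positivity),
    one_add_div hl.ne', inv_div]

theorem stmt_11 :
    Filter.Tendsto (fun ℓ : ℕ => eta ℓ * ℓ * Real.log ℓ) Filter.atTop
      (nhds (Real.exp (-Real.eulerMascheroniConstant))) := by
  have hlog : Tendsto (fun ℓ : ℕ => Real.log ℓ) atTop atTop :=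
    Real.tendsto_log_atTop.comp tendsto_natCast_atTop_atTop
  have hlow : Tendsto (fun ℓ : ℕ => (∏ p ∈ (ℓ + 1).primesLE, (1 - (p : ℝ)⁻¹)) *
      Real.log (ℓ + 1 : ℕ) * (Real.log ℓ / Real.log (ℓ + 1 : ℕ))) atTop
      (nhds (Real.exp (-Real.eulerMascheroniConstant) * 1)) :=
    (tendsto_prod_one_sub_inv_prime_mul_log.comp (tendsto_add_atTop_nat 1)).mul
      tendsto_log_add_one_div_log
  set z : ℕ → ℝ := fun ℓ => ℓ / Real.log ℓ
  set y : ℕ → ℕ := fun ℓ => ⌊z ℓ⌋₊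
  have hz : Tendsto z atTop atTop := by
    have h := (Real.isLittleO_log_id_atTop.tendsto_div_nhds_zero).comp
      (tendsto_natCast_atTop_atTop (R := ℝ))
    have h' : Tendsto (fun ℓ : ℕ => Real.log ℓ / ℓ) atTop (nhdsWithin 0 (Set.Ioi 0)) := by
      refine tendsto_nhdsWithin_iff.2 ⟨h, ?_⟩
      filter_upwards [eventually_gt_atTop 1] with ℓ hℓ
      exact div_pos (Real.log_pos (by exact_mod_cast hℓ)) (by positivity)
    exact h'.inv_tendsto_nhdsGT_zero.congr fun ℓ => by simp [z]
  have hy : Tendsto y atTop atTop := tendsto_nat_floor_atTop.comp hz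
  have hyz : Tendsto (fun ℓ => (y ℓ : ℝ) / z ℓ) atTop (nhds 1) :=
    (tendsto_nat_floor_div_atTop (R := ℝ)).comp hz
  have hyℓ : Tendsto (fun ℓ : ℕ => (y ℓ : ℝ) / ℓ) atTop (nhds 0) := by
    have h := hyz.mul hlog.inv_tendsto_atTop
    rw [one_mul] at h
    refine h.congr' ?_
    filter_upwards [eventually_gt_atTop 1] with ℓ hℓ
    have hl : 0 < Real.log ℓ := Real.log_pos (by exact_mod_cast hℓ)
    simp only [z, Pi.inv_apply]
    field_simp
  have hratio : Tendsto (fun ℓ : ℕ => (1 - (y ℓ : ℝ) / ℓ)⁻¹) atTop (nhds 1) := by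
    simpa using (tendsto_const_nhds.sub hyℓ).inv₀ (by norm_num : (1 : ℝ) - 0 ≠ 0)
  have hlogratio : Tendsto (fun ℓ : ℕ => Real.log ℓ / Real.log (y ℓ)) atTop (nhds 1) := by
    have h1 : Tendsto (fun ℓ : ℕ => Real.log ((y ℓ : ℝ) / z ℓ) / Real.log ℓ) atTop (nhds 0) :=
      ((Real.continuousAt_log one_ne_zero).tendsto.comp hyz).div_atTop hlog
    have h2 : Tendsto (fun ℓ : ℕ => Real.log (Real.log ℓ) / Real.log ℓ) atTop (nhds 0) :=
      Real.isLittleO_log_id_atTop.tendsto_div_nhds_zero.comp hlog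
    have h3 := ((tendsto_const_nhds (x := (1 : ℝ))).add (h1.sub h2)).inv₀ (by norm_num)
    norm_num at h3
    refine h3.congr' ?_
    filter_upwards [eventually_gt_atTop 1, hy.eventually_gt_atTop 0] with ℓ hℓ hyℓ
    have hℓ' : (1 : ℝ) < ℓ := by exact_mod_cast hℓ
    have hl : 0 < Real.log ℓ := Real.log_pos hℓ'
    have hy' : (0 : ℝ) < y ℓ := by exact_mod_cast hyℓ
    have e : Real.log ((y ℓ : ℝ) / z ℓ) = Real.log (y ℓ) - (Real.log ℓ - Real.log (Real.log ℓ)) := by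
      rw [Real.log_div hy'.ne' (by positivity), Real.log_div (by positivity) hl.ne']
    rw [e, ← inv_div (Real.log (y ℓ))]
    congr 1
    field_simp
    ring
  have hup := ((tendsto_prod_one_sub_inv_prime_mul_log.comp hy).mul hratio).mul hlogratio
  rw [mul_one, mul_one] at hup
  rw [mul_one] at hlow
  refine tendsto_of_tendsto_of_tendsto_of_le_of_le' hlow hup ?_ ?_
  · filter_upwards [eventually_gt_atTop 1] with ℓ hℓ
    have hℓ' : (1 : ℝ) < ℓ := by exact_mod_cast hℓ
    have hl1 : 0 < Real.log (ℓ + 1 : ℕ) := Real.log_pos (by push_cast; linarith)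
    rw [mul_assoc, mul_div_cancel₀ _ hl1.ne']
    refine mul_le_mul_of_nonneg_right ?_ (Real.log_nonneg hℓ'.le)
    exact (div_le_iff₀ (by positivity)).1 (le_eta (by omega))
  · filter_upwards [eventually_gt_atTop 1, hy.eventually_gt_atTop 1,
      hyℓ.eventually_lt_const one_pos] with ℓ hℓ hy1 hlt
    have hℓ' : (1 : ℝ) < ℓ := by exact_mod_cast hℓ
    have hyl : 0 < Real.log (y ℓ) := Real.log_pos (by exact_mod_cast hy1)
    rw [div_lt_one (by positivity)] at hlt
    have hsub : (0 : ℝ) < ℓ - y ℓ := sub_pos.2 hlt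
    have h := mul_le_mul_of_nonneg_right (mul_le_mul_of_nonneg_right
      (eta_le (y := y ℓ) (ℓ := ℓ) (by exact_mod_cast hlt)) (Nat.cast_nonneg (α := ℝ) ℓ))
      (Real.log_nonneg hℓ'.le)
    refine h.trans_eq ?_
    have e : (1 - (y ℓ : ℝ) / ℓ)⁻¹ = ℓ / (ℓ - y ℓ) := by
      rw [one_sub_div (by positivity), inv_div]
    simp only [Function.comp_apply]
    rw [e]
    field_simp
end

section
/- Assume that every admissible 50-tuple of distinct integers contains a Dickson pair, i.e., for every admissible 50-tuple (x_1,…,x_50) of distinct integers there exist indices i ≠ j such that there are infinitely many integers n with n + x_i and n + x_j both prime. Then the set of de Polignac numbers has lower density at least (1/49) · ∏_{p ≤ 50, p prime} (1 − 1/p), and this quantity is greater than 1/354. -/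
open Filter

/-- A `k`-tuple of integers is admissible if for every prime `p` its entries
do not cover all residue classes mod `p`. -/
def AdmissibleTuple {k : ℕ} (x : Fin k → ℤ) : Prop :=
  ∀ p : ℕ, p.Prime → ∃ r : ZMod p, ∀ i, (x i : ZMod p) ≠ r

/-- A de Polignac number: an integer `h` such that there are infinitely many primes `p`
with `p + h` also prime. -/
def DePolignac (h : ℤ) : Prop :=
  {p : ℤ | Prime p ∧ Prime (p + h)}.Infinite

lemma DePolignac.of_infinite_shift {a b : ℤ}
    (h : {n : ℤ | Prime (n + a) ∧ Prime (n + b)}.Infinite) : DePolignac (b - a) := by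
  refine (h.image (f := fun n => n + a) (add_left_injective a).injOn).mono ?_
  rintro _ ⟨n, ⟨hn₁, hn₂⟩, rfl⟩
  exact ⟨hn₁, by simpa [add_assoc] using hn₂⟩

/-- Integers all coprime to every prime up to `k` form an admissible `k`-tuple: small primes
miss the class `0`, and large primes have too many classes. -/
lemma admissibleTuple_of_coprime_primorial {k : ℕ} {x : Fin k → ℤ}
    (hx : ∀ i, IsCoprime (x i) (primorial k : ℤ)) : AdmissibleTuple x := by
  intro p hp
  have : Fact p.Prime := ⟨hp⟩
  rcases le_or_gt p k with hpk | hpk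
  · refine ⟨0, fun i hi => ?_⟩
    rw [ZMod.intCast_zmod_eq_zero_iff_dvd] at hi
    have hdvd : (p : ℤ) ∣ (primorial k : ℤ) := by
      exact_mod_cast (hp.dvd_primorial_iff).2 hpk
    exact (Nat.prime_iff_prime_int.1 hp).not_isUnit ((hx i).isUnit_of_dvd' hi hdvd)
  · have hns : ¬ Function.Surjective (fun i => (x i : ZMod p)) := fun hs => by
      have := Fintype.card_le_of_surjective _ hs
      rw [ZMod.card, Fintype.card_fin] at this
      omega
    simpa [Function.Surjective] using hns

/-- A greedy choice: if a relation has no `k + 1` elements of `S` that are pairwise unrelated, then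
at most `k` elements of `S` dominate `S`. -/
lemma exists_dominating_finset {α : Type*} [DecidableEq α] (S : Set α) (r : α → α → Prop)
    (hr : ∀ a b, r a b → r b a) (k : ℕ)
    (h : ∀ x : Fin (k + 1) → α, Function.Injective x → (∀ i, x i ∈ S) →
      ∃ i j, i ≠ j ∧ r (x i) (x j)) :
    ∃ T : Finset α, T.card ≤ k ∧ ∀ y ∈ S, ∃ t ∈ T, y = t ∨ r t y := by
  by_contra! hT
  have key : ∀ m ≤ k + 1, ∃ T : Finset α, T.card = m ∧ (∀ t ∈ T, t ∈ S) ∧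
      ∀ a ∈ T, ∀ b ∈ T, a ≠ b → ¬ r a b := by
    intro m
    induction m with
    | zero => exact fun _ => ⟨∅, by simp⟩
    | succ m ih =>
      intro hm
      obtain ⟨T, hc, hS, hi⟩ := ih (by omega)
      obtain ⟨y, hyS, hy⟩ := hT T (by omega)
      have hyT : y ∉ T := fun hmem => (hy y hmem).1 rfl
      refine ⟨insert y T, by rw [Finset.card_insert_of_notMem hyT, hc], ?_, ?_⟩
      · simpa using ⟨hyS, hS⟩
      · intro a ha b hb hab
        rcases Finset.mem_insert.1 ha with rfl | haT <;>
          rcases Finset.mem_insert.1 hb with rfl | hbT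
        · exact absurd rfl hab
        · exact fun hab' => (hy b hbT).2 (hr _ _ hab')
        · exact (hy a haT).2
        · exact hi a haT b hbT hab
  obtain ⟨T, hc, hS, hi⟩ := key (k + 1) le_rfl
  let e := T.equivFinOfCardEq hc
  obtain ⟨i, j, hij, hrij⟩ := h (fun i => (e.symm i : α))
    (Subtype.val_injective.comp e.symm.injective) (fun i => hS _ (e.symm i).2)
  refine hi _ (e.symm i).2 _ (e.symm j).2 (fun heq => hij ?_) hrij
  exact e.symm.injective (Subtype.ext heq)

lemma finite_inter_Icc (A : Set ℤ) (a b : ℤ) : (A ∩ Set.Icc a b).Finite :=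
  (Set.finite_Icc a b).subset Set.inter_subset_right

/-- Translating a set changes its counting function by a bounded amount. -/
lemma ncard_translate_inter_Icc_le (A : Set ℤ) (t : ℤ) (N : ℕ) :
    ({y | y = t ∨ y - t ∈ A} ∩ Set.Icc 1 (N : ℤ)).ncard ≤
      (A ∩ Set.Icc 1 (N : ℤ)).ncard + (2 * t.natAbs + 2) := by
  have hsub : {y | y = t ∨ y - t ∈ A} ∩ Set.Icc 1 (N : ℤ) ⊆
      (fun y => y + t) '' ((A ∩ Set.Icc 1 (N : ℤ)) ∪
        (({0} ∪ Set.Ioc (-t.natAbs : ℤ) 0) ∪ Set.Ioc (N : ℤ) (N + t.natAbs))) := by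
    rintro y ⟨hy, hy₁, hy₂⟩
    refine ⟨y - t, ?_, by simp⟩
    rcases hy with rfl | hy
    · simp
    · by_cases h1 : y - t ≤ 0
      · right; left; right
        constructor <;> omega
      · by_cases h2 : (N : ℤ) < y - t
        · right; right
          constructor <;> omega
        · left
          exact ⟨hy, by omega, by omega⟩
  have hfin : ((A ∩ Set.Icc 1 (N : ℤ)) ∪
      (({0} ∪ Set.Ioc (-t.natAbs : ℤ) 0) ∪ Set.Ioc (N : ℤ) (N + t.natAbs))).Finite :=
    (finite_inter_Icc A _ _).union
      (((Set.finite_singleton _).union (Set.finite_Ioc _ _)).union (Set.finite_Ioc _ _))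
  refine (Set.ncard_le_ncard hsub (hfin.image _)).trans ((Set.ncard_image_le hfin).trans ?_)
  have h1 : (Set.Ioc (-t.natAbs : ℤ) 0).ncard = t.natAbs := by
    rw [← Finset.coe_Ioc, Set.ncard_coe_finset, Int.card_Ioc]; omega
  have h2 : (Set.Ioc (N : ℤ) (N + t.natAbs)).ncard = t.natAbs := by
    rw [← Finset.coe_Ioc, Set.ncard_coe_finset, Int.card_Ioc]; omega
  have h3 := Set.ncard_union_le (A ∩ Set.Icc 1 (N : ℤ))
    (({0} ∪ Set.Ioc (-t.natAbs : ℤ) 0) ∪ Set.Ioc (N : ℤ) (N + t.natAbs))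
  have h4 := Set.ncard_union_le ({0} ∪ Set.Ioc (-t.natAbs : ℤ) 0) (Set.Ioc (N : ℤ) (N + t.natAbs))
  have h5 := Set.ncard_union_le {0} (Set.Ioc (-t.natAbs : ℤ) 0)
  have h6 := Set.ncard_singleton (0 : ℤ)
  omega

/-- If translates of `A` by at most `k` integers cover `S`, the counting function of `S` is at most
`k` times that of `A`, up to a bounded error. -/
lemma exists_ncard_inter_Icc_le_of_translates (A S : Set ℤ) (T : Finset ℤ) {k : ℕ}
    (hk : T.card ≤ k) (hT : ∀ y ∈ S, ∃ t ∈ T, y = t ∨ y - t ∈ A) :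
    ∃ C : ℕ, ∀ N : ℕ,
      (S ∩ Set.Icc 1 (N : ℤ)).ncard ≤ k * (A ∩ Set.Icc 1 (N : ℤ)).ncard + C := by
  refine ⟨∑ t ∈ T, (2 * t.natAbs + 2), fun N => ?_⟩
  have hsub : S ∩ Set.Icc 1 (N : ℤ) ⊆
      ⋃ t ∈ T, ({y | y = t ∨ y - t ∈ A} ∩ Set.Icc 1 (N : ℤ)) := by
    rintro y ⟨hy, hyN⟩
    obtain ⟨t, ht, h⟩ := hT y hy
    exact Set.mem_biUnion (x := t) ht ⟨h, hyN⟩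
  calc (S ∩ Set.Icc 1 (N : ℤ)).ncard
      ≤ (⋃ t ∈ T, ({y | y = t ∨ y - t ∈ A} ∩ Set.Icc 1 (N : ℤ))).ncard :=
        Set.ncard_le_ncard hsub (T.finite_toSet.biUnion fun t _ => finite_inter_Icc _ _ _)
    _ ≤ ∑ t ∈ T, ({y | y = t ∨ y - t ∈ A} ∩ Set.Icc 1 (N : ℤ)).ncard :=
        Finset.set_ncard_biUnion_le _ _
    _ ≤ ∑ t ∈ T, ((A ∩ Set.Icc 1 (N : ℤ)).ncard + (2 * t.natAbs + 2)) :=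
        Finset.sum_le_sum fun t _ => ncard_translate_inter_Icc_le A t N
    _ = T.card * (A ∩ Set.Icc 1 (N : ℤ)).ncard + ∑ t ∈ T, (2 * t.natAbs + 2) := by
        rw [Finset.sum_add_distrib, Finset.sum_const, smul_eq_mul]
    _ ≤ _ := by gcongr

lemma totient_mul_div_le_ncard_coprime (P N : ℕ) :
    P.totient * (N / P) ≤ ({y : ℤ | IsCoprime y (P : ℤ)} ∩ Set.Icc 1 (N : ℤ)).ncard := by
  have hcount : ∀ q : ℕ, ((Finset.Ico 1 (1 + P * q)).filter P.Coprime).card = P.totient * q := by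
    intro q
    induction q with
    | zero => simp
    | succ q ih =>
      rw [← Finset.Ico_union_Ico_eq_Ico (b := 1 + P * q) (by omega) (by rw [mul_add]; omega),
        Finset.filter_union, Finset.card_union_of_disjoint
          (Finset.disjoint_filter_filter (Finset.Ico_disjoint_Ico_consecutive _ _ _)), ih,
        mul_add, ← add_assoc, mul_one, Nat.filter_coprime_Ico_eq_totient, mul_add, mul_one]
  rw [← hcount, ← Set.ncard_coe_finset,
    ← Set.ncard_image_of_injective _ (Nat.cast_injective (R := ℤ))]
  refine Set.ncard_le_ncard ?_ (finite_inter_Icc _ _ _)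
  rintro _ ⟨n, hn, rfl⟩
  simp only [Finset.coe_filter, Finset.mem_Ico, Set.mem_ofPred_eq] at hn
  have := Nat.mul_div_le N P
  exact ⟨Nat.isCoprime_iff_coprime.2 hn.2.symm, by simp; omega, by simp; omega⟩

lemma le_lowerDensity_of_le_mul_add {A : Set ℤ} {d C : ℝ}
    (h : ∀ N : ℕ, d * N ≤ (A ∩ Set.Icc 1 (N : ℤ)).ncard + C) : d ≤ lowerDensity A := by
  have hlim : Tendsto (fun N : ℕ => d - C / N) atTop (nhds d) := by
    simpa using (tendsto_const_nhds (x := d)).sub (tendsto_const_div_atTop_nhds_zero_nat C)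
  rw [← hlim.liminf_eq]
  refine liminf_le_liminf ?_ hlim.isBoundedUnder_ge ?_
  · filter_upwards [eventually_gt_atTop 0] with N hN
    have hN' : (0 : ℝ) < N := by exact_mod_cast hN
    rw [Nat.card_coe_set_eq, le_div_iff₀ hN', sub_mul, div_mul_cancel₀ _ hN'.ne']
    linarith [h N]
  · refine IsBoundedUnder.isCoboundedUnder_ge ⟨1, ?_⟩
    refine eventually_map.2 (Eventually.of_forall fun N => div_le_one_of_le₀ ?_ N.cast_nonneg)
    rw [Nat.card_coe_set_eq]
    have := Set.ncard_le_ncard (Set.inter_subset_right (s := A)) (Set.finite_Icc 1 (N : ℤ))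
    rw [← Finset.coe_Icc, Set.ncard_coe_finset, Int.card_Icc] at this
    rw [Finset.coe_Icc] at this
    exact_mod_cast this.trans (by omega)

lemma totient_primorial_eq (n : ℕ) : ((primorial n).totient : ℝ) =
    primorial n * ∏ p ∈ Finset.filter Nat.Prime (Finset.range (n + 1)), (1 - 1 / (p : ℝ)) := by
  have h := congrArg (Rat.cast : ℚ → ℝ) (Nat.totient_eq_mul_prod_factors (primorial n))
  have hpf : (primorial n).primeFactors = Finset.filter Nat.Prime (Finset.range (n + 1)) :=
    Nat.primeFactors_prod fun p hp => (Finset.mem_filter.1 hp).2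
  rw [hpf] at h
  push_cast at h
  simpa using h

theorem stmt_12
    (hZhang : ∀ x : Fin 50 → ℤ, Function.Injective x → AdmissibleTuple x →
      ∃ i j : Fin 50, i ≠ j ∧ {n : ℤ | Prime (n + x i) ∧ Prime (n + x j)}.Infinite) :
    (1 / 49 : ℝ) * ∏ p ∈ Finset.filter Nat.Prime (Finset.range 51), (1 - 1 / (p : ℝ)) ≤
        lowerDensity {h : ℤ | DePolignac h} ∧
      (1 / 354 : ℝ) <
        (1 / 49 : ℝ) * ∏ p ∈ Finset.filter Nat.Prime (Finset.range 51), (1 - 1 / (p : ℝ)) := by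
  refine ⟨?_, ?_⟩
  · obtain ⟨T, hTk, hT⟩ := exists_dominating_finset {y : ℤ | IsCoprime y (primorial 50 : ℤ)}
      (fun a b => {n : ℤ | Prime (n + a) ∧ Prime (n + b)}.Infinite)
      (fun a b hab => by simpa only [and_comm] using hab) 49
      (fun x hx hxS => hZhang x hx (admissibleTuple_of_coprime_primorial hxS))
    obtain ⟨C, hC⟩ := exists_ncard_inter_Icc_le_of_translates {h : ℤ | DePolignac h} _ T hTk
      (fun y hy => (hT y hy).imp fun t ht => ⟨ht.1, ht.2.imp_right .of_infinite_shift⟩)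
    have htot := totient_primorial_eq 50
    have hP : 0 < primorial 50 := primorial_pos 50
    generalize primorial 50 = P at hC htot hP
    refine le_lowerDensity_of_le_mul_add (C := (C + P.totient) / 49) fun N => ?_
    have hlow : (P.totient * (N / P : ℕ) : ℝ) ≤
        49 * ({h : ℤ | DePolignac h} ∩ Set.Icc 1 (N : ℤ)).ncard + C := by
      exact_mod_cast (totient_mul_div_le_ncard_coprime P N).trans (hC N)
    have hdiv : (N : ℝ) ≤ P * (N / P : ℕ) + P := by
      exact_mod_cast (Nat.lt_mul_div_succ N hP).le
    have hP' : (0 : ℝ) < P := by exact_mod_cast hP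
    generalize ∏ p ∈ Finset.filter Nat.Prime (Finset.range 51), (1 - 1 / (p : ℝ)) = d at htot ⊢
    have hd : 0 ≤ d := by
      have : (0 : ℝ) ≤ P * d := htot ▸ Nat.cast_nonneg _
      exact nonneg_of_mul_nonneg_right this hP'
    have := mul_le_mul_of_nonneg_left hdiv hd
    rw [htot] at hlow ⊢
    linarith
  · have hset : Finset.filter Nat.Prime (Finset.range 51) =
        {2, 3, 5, 7, 11, 13, 17, 19, 23, 29, 31, 37, 41, 43, 47} := by decide
    rw [hset]
    norm_num
end

section
/- There is an absolute constant c > 0 with the following property. Let k ≥ m ≥ 1 be integers. Then there exists x_0 (depending on m and k) such that for all real x ≥ x_0 the following holds: let N_x = {n ∈ ℤ : −x < n ≤ x and gcd(n, ∏_{p ≤ k, p prime} p) = 1}, and let A ⊆ ℤ^m be translation-invariant and permutation-invariant (i.e., closed under adding (t,…,t) for any t ∈ ℤ and under permuting coordinates). If |A ∩ N_x^m| / |N_x|^m > 1 / (8m · C(k−1, m−1)), then |A ∩ ((−2x, 2x] ∩ ℤ)^m| ≥ (log 3m)^{−cm} · x^m / ((k/m) · log log(3k/m))^{m−1}, where C(n,r)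 denotes the binomial coefficient. -/
open Filter

/-- `N_x`: the set of integers `n` with `-x < n ≤ x` that are coprime to the product
of the primes up to `k`. -/
def Nset (k : ℕ) (x : ℝ) : Set ℤ :=
  {n : ℤ | -x < (n : ℝ) ∧ (n : ℝ) ≤ x ∧
    Int.gcd n ((∏ p ∈ Finset.filter Nat.Prime (Finset.range (k + 1)), p : ℕ) : ℤ) = 1}

lemma Nat.Prime.pow_div_dvd_factorial {p : ℕ} (hp : p.Prime) (n : ℕ) :
    p ^ (n / p) ∣ n.factorial := by
  rw [hp.pow_dvd_factorial_iff (b := Nat.log p n + 2) (by omega)]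
  calc n / p = n / p ^ 1 := by rw [pow_one]
    _ ≤ _ := Finset.single_le_sum (f := fun i => n / p ^ i) (fun _ _ => Nat.zero_le _)
      (Finset.mem_Ico.2 ⟨le_rfl, by omega⟩)

/-- The upper bound in the first theorem of Mertens. -/
lemma sum_primesLE_log_div_le {n : ℕ} (hn : 1 ≤ n) :
    ∑ p ∈ Nat.primesLE n, Real.log p / p ≤ Real.log n + Real.log 4 := by
  have hdvd : ∏ p ∈ Nat.primesLE n, p ^ (n / p) ∣ n.factorial := by
    refine Finset.prod_dvd_of_isRelPrime (fun p hp q hq hpq => ?_)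
      (fun p hp => (Nat.prime_of_mem_primesLE hp).pow_div_dvd_factorial n)
    have := (Nat.coprime_primes (Nat.prime_of_mem_primesLE hp)
      (Nat.prime_of_mem_primesLE hq)).2 hpq
    exact (Nat.coprime_iff_isRelPrime.1 (this.pow _ _))
  have hle : ((∏ p ∈ Nat.primesLE n, p ^ (n / p) : ℕ) : ℝ) ≤ (n : ℝ) ^ n := by
    exact_mod_cast (Nat.le_of_dvd (Nat.factorial_pos n) hdvd).trans (Nat.factorial_le_pow n)
  have hpos : ∀ p ∈ Nat.primesLE n, 0 < (p : ℝ) := fun p hp =>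
    by exact_mod_cast (Nat.prime_of_mem_primesLE hp).pos
  have hlog : ∑ p ∈ Nat.primesLE n, ((n / p : ℕ) : ℝ) * Real.log p ≤ n * Real.log n := by
    have := Real.log_le_log (by
      push_cast
      exact Finset.prod_pos fun p hp => pow_pos (hpos p hp) _) hle
    rw [Real.log_pow] at this
    refine le_trans (le_of_eq ?_) this
    push_cast
    rw [Real.log_prod (fun p hp => (pow_pos (hpos p hp) _).ne')]
    exact Finset.sum_congr rfl fun p _ => (Real.log_pow _ _).symm
  have htheta : ∑ p ∈ Nat.primesLE n, Real.log p ≤ Real.log 4 * n := by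
    rw [← Chebyshev.theta_eq_sum_primesLE_log]
    exact Chebyshev.theta_le_log4_mul_x n.cast_nonneg
  have hn' : (0 : ℝ) < n := by exact_mod_cast hn
  have key : n * ∑ p ∈ Nat.primesLE n, Real.log p / p ≤
      ∑ p ∈ Nat.primesLE n, ((n / p : ℕ) : ℝ) * Real.log p + ∑ p ∈ Nat.primesLE n, Real.log p := by
    rw [Finset.mul_sum, ← Finset.sum_add_distrib]
    refine Finset.sum_le_sum fun p hp => ?_
    have h1 : (n : ℝ) / p ≤ ((n / p : ℕ) : ℝ) + 1 := by
      have := (Nat.lt_floor_add_one ((n : ℝ) / p)).le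
      rwa [Nat.floor_div_natCast, Nat.floor_natCast] at this
    have h2 : 0 ≤ Real.log p := Real.log_natCast_nonneg p
    calc (n : ℝ) * (Real.log p / p) = (n / p) * Real.log p := by ring
      _ ≤ (((n / p : ℕ) : ℝ) + 1) * Real.log p := by gcongr
      _ = _ := by ring
  refine le_of_mul_le_mul_left ?_ hn'
  linarith

lemma tsum_rpow_neg_le {s : ℝ} (hs : 1 < s) :
    ∑' n : ℕ, (n : ℝ) ^ (-s) ≤ 1 + 1 / (s - 1) := by
  have h1 := ZetaAsymptotics.zeta_limit_aux1 hs
  have h2 : 0 ≤ ZetaAsymptotics.termTSum s := tsum_nonneg fun n =>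
    ZetaAsymptotics.term_nonneg (n + 1) s
  have hsum : Summable fun n : ℕ => (n : ℝ) ^ (-s) := Real.summable_nat_rpow.2 (by linarith)
  have h3 : ∑' n : ℕ, (n : ℝ) ^ (-s) = ∑' n : ℕ, 1 / ((n : ℝ) + 1) ^ s := by
    rw [hsum.tsum_eq_zero_add, Nat.cast_zero, Real.zero_rpow (by linarith), zero_add]
    refine tsum_congr fun n => ?_
    rw [Real.rpow_neg (by positivity)]
    push_cast
    rw [one_div]
  rw [h3]
  nlinarith

lemma prod_primesLE_one_sub_rpow_inv_le {s : ℝ} (hs : 1 < s) (n : ℕ) :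
    ∏ p ∈ Nat.primesLE n, (1 - (p : ℝ) ^ (-s))⁻¹ ≤ 1 + 1 / (s - 1) := by
  have hsum : Summable fun n : ℕ => (n : ℝ) ^ (-s) := Real.summable_nat_rpow.2 (by linarith)
  let f : ℕ →* ℝ :=
    { toFun := fun n => (n : ℝ) ^ (-s)
      map_one' := by simp
      map_mul' := fun a b => by
        push_cast
        exact Real.mul_rpow a.cast_nonneg b.cast_nonneg }
  have h := EulerProduct.prod_primesBelow_geometric_eq_tsum_smoothNumbers (f := f) hsum (n + 1)
  refine le_trans (le_of_eq h) (le_trans ?_ (tsum_rpow_neg_le hs))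
  exact hsum.tsum_subtype_le _ _ fun n => Real.rpow_nonneg n.cast_nonneg _

/-- The upper bound in the third theorem of Mertens, with an explicit constant. -/
lemma prod_primesLE_one_sub_inv_inv_le {n : ℕ} (hn : 2 ≤ n) :
    ∏ p ∈ Nat.primesLE n, (1 - 1 / (p : ℝ))⁻¹ ≤ 3 * Real.exp 6 * Real.log n := by
  have hL2 : Real.log 2 ≤ Real.log n := Real.log_le_log (by norm_num) (by exact_mod_cast hn)
  have hl2 : (0.69 : ℝ) < Real.log 2 := by linarith [Real.log_two_gt_d9]
  set L := Real.log n
  have hLpos : 0 < L := by linarith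
  have hs : 1 < 1 + 1 / L := by
    have : 0 < 1 / L := by positivity
    linarith
  have hterm : ∀ p ∈ Nat.primesLE n, (1 - 1 / (p : ℝ))⁻¹ ≤
      (1 - (p : ℝ) ^ (-(1 + 1 / L)))⁻¹ * Real.exp (2 / L * (Real.log p / p)) := by
    intro p hp
    have hp2 : (2 : ℝ) ≤ p := by exact_mod_cast Nat.two_le_of_mem_primesLE hp
    have hp0 : (0 : ℝ) < p := by linarith
    have hlogp : 0 ≤ Real.log p := Real.log_natCast_nonneg p
    have hinv : 1 / (p : ℝ) ≤ 1 / 2 := one_div_le_one_div_of_le (by norm_num) hp2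
    have hinv0 : 0 < 1 / (p : ℝ) := by positivity
    have hpow : (p : ℝ) ^ (-(1 + 1 / L)) = 1 / p * Real.exp (-(Real.log p / L)) := by
      rw [neg_add, Real.rpow_add hp0, Real.rpow_neg_one, Real.rpow_def_of_pos hp0, one_div (p : ℝ)]
      congr 2
      ring
    have hexp := Real.add_one_le_exp (-(Real.log p / L))
    have hexp' : Real.exp (-(Real.log p / L)) ≤ 1 := Real.exp_le_one_iff.2 (by
      have : 0 ≤ Real.log p / L := by positivity
      linarith)
    have h1 : 0 < 1 - (p : ℝ) ^ (-(1 + 1 / L)) := by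
      rw [hpow]
      nlinarith
    rw [inv_mul_eq_div, inv_le_comm₀ (by linarith) (by positivity), inv_div,
      div_le_iff₀ (by positivity), hpow]
    have h2 := Real.add_one_le_exp (2 / L * (Real.log p / p))
    have h3 : 0 ≤ Real.log p / L := by positivity
    have h4 : 2 / L * (Real.log p / p) = 2 * (1 / p * (Real.log p / L)) := by ring
    have h5 : 0 ≤ 1 / p * (Real.log p / L) := by positivity
    rw [h4] at h2 ⊢
    nlinarith [mul_le_mul_of_nonneg_left h2 (by linarith : 0 ≤ 1 - 1 / (p : ℝ)),
      mul_le_mul_of_nonneg_left hexp hinv0.le]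
  have hnn : ∀ p ∈ Nat.primesLE n, 0 ≤ (1 - 1 / (p : ℝ))⁻¹ := by
    intro p hp
    have hp2 : (2 : ℝ) ≤ p := by exact_mod_cast Nat.two_le_of_mem_primesLE hp
    have hinv : 1 / (p : ℝ) ≤ 1 / 2 := one_div_le_one_div_of_le (by norm_num) hp2
    exact inv_nonneg.2 (by linarith)
  refine (Finset.prod_le_prod hnn hterm).trans ?_
  rw [Finset.prod_mul_distrib, ← Real.exp_sum, ← Finset.mul_sum]
  have hE := prod_primesLE_one_sub_rpow_inv_le hs n
  have hM := sum_primesLE_log_div_le (n := n) (by omega)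
  have h4 : Real.log 4 = 2 * Real.log 2 := by
    rw [show (4 : ℝ) = 2 ^ 2 by norm_num, Real.log_pow]; norm_num
  have hM' : 2 / L * ∑ p ∈ Nat.primesLE n, Real.log p / p ≤ 6 := by
    calc 2 / L * ∑ p ∈ Nat.primesLE n, Real.log p / p ≤ 2 / L * (3 * L) := by
          gcongr
          linarith
      _ = 6 := by field_simp; norm_num
  calc _ ≤ (1 + 1 / (1 + 1 / L - 1)) * Real.exp 6 := by gcongr
    _ = (1 + L) * Real.exp 6 := by rw [add_sub_cancel_left, one_div_one_div]
    _ ≤ (3 * L) * Real.exp 6 := by gcongr; linarith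
    _ = _ := by ring

lemma sum_pow_sub_card_image_le_aux {α : Type*} [Fintype α] [DecidableEq α] {z : ℝ} (hz : 1 ≤ z)
    (M m : ℕ) (hm : m ≤ M) :
    ∑ s : Fin m → α, z ^ (m - (Finset.univ.image s).card) ≤
      (Fintype.card α + (z - 1) * M) ^ m := by
  induction m with
  | zero => simp
  | succ m ih =>
    have hcons : ∀ (a : α) (s : Fin m → α),
        z ^ (m + 1 - (Finset.univ.image (Fin.cons a s : Fin (m + 1) → α)).card) =
          z ^ (m - (Finset.univ.image s).card) *
            (1 + if a ∈ Finset.univ.image s then z - 1 else 0) := by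
      intro a s
      have himage : Finset.univ.image (Fin.cons a s : Fin (m + 1) → α) =
          insert a (Finset.univ.image s) := by
        ext b
        simp [Fin.exists_fin_succ, eq_comm]
      have hcard : (Finset.univ.image s).card ≤ m := by
        simpa using Finset.card_image_le (s := Finset.univ) (f := s)
      rw [himage]
      split_ifs with h
      · rw [Finset.insert_eq_of_mem h, Nat.sub_add_comm hcard, pow_succ]
        ring
      · rw [Finset.card_insert_of_notMem h, Nat.add_sub_add_right]
        ring
    rw [← (Fin.consEquiv fun _ : Fin (m + 1) => α).sum_comp, Fintype.sum_prod_type_right]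
    simp only [Fin.consEquiv, Equiv.coe_fn_mk, hcons]
    have hinner : ∀ s : Fin m → α,
        ∑ a, z ^ (m - (Finset.univ.image s).card) *
            (1 + if a ∈ Finset.univ.image s then z - 1 else 0) ≤
          z ^ (m - (Finset.univ.image s).card) * (Fintype.card α + (z - 1) * M) := by
      intro s
      rw [← Finset.mul_sum, Finset.sum_add_distrib, Finset.sum_ite_mem]
      have hcard : ((Finset.univ.image s).card : ℝ) ≤ M := by
        have : (Finset.univ.image s).card ≤ m := by
          simpa using Finset.card_image_le (s := Finset.univ) (f := s)
        exact_mod_cast this.trans (by omega)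
      simp only [Finset.sum_const, Finset.card_univ, nsmul_eq_mul, mul_one, Finset.univ_inter]
      have : 0 ≤ z - 1 := by linarith
      rw [mul_comm (z - 1)]
      gcongr
    refine (Finset.sum_le_sum fun s _ => hinner s).trans ?_
    rw [← Finset.sum_mul, pow_succ]
    have : 0 ≤ z - 1 := by linarith
    gcongr
    exact ih (by omega)

/-- A random `m`-tuple with few possible entries rarely has many coincidences. -/
lemma sum_pow_sub_card_image_le {α : Type*} [Fintype α] [DecidableEq α] {z : ℝ} (hz : 1 ≤ z)
    (m : ℕ) :
    ∑ s : Fin m → α, z ^ (m - (Finset.univ.image s).card) ≤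
      (Fintype.card α + (z - 1) * m) ^ m :=
  sum_pow_sub_card_image_le_aux hz m m le_rfl

section Residues

variable {ι : Type*} (p : ι → ℕ)

/-- The integers in `(-x, x]`. -/
noncomputable def symmIoc (x : ℝ) : Finset ℤ := Finset.Ioc ⌊-x⌋ ⌊x⌋

lemma mem_symmIoc {x : ℝ} {n : ℤ} : n ∈ symmIoc x ↔ -x < n ∧ (n : ℝ) ≤ x := by
  rw [symmIoc, Finset.mem_Ioc, Int.floor_lt, Int.le_floor]

/-- The residues of an integer modulo all the `p i`. -/
def residues (n : ℤ) : ∀ i, ZMod (p i) := fun i => (n : ZMod (p i))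

lemma card_residues_eq_bounds [Fintype ι] [∀ i, Fact (p i).Prime]
    (hp : Function.Injective p) {x : ℝ}
    (hx : ((∏ i, p i : ℕ) : ℝ) + 1 ≤ x) (ω : ∀ i, ZMod (p i)) :
    x / (∏ i, p i : ℕ) ≤ (((symmIoc x).filter fun n => residues p n = ω).card : ℝ) ∧
      (((symmIoc x).filter fun n => residues p n = ω).card : ℝ) ≤ 4 * x / (∏ i, p i : ℕ) := by
  have hcop : Pairwise (Function.onFun Nat.Coprime p) := fun i j hij =>
    (Nat.coprime_primes (Fact.out : (p i).Prime) (Fact.out : (p j).Prime)).2 (hp.ne hij)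
  set e := ZMod.prodEquivPi p hcop
  have hPpos : 0 < ∏ i, p i := Finset.prod_pos fun i _ => (Fact.out : (p i).Prime).pos
  have : NeZero (∏ i, p i) := ⟨hPpos.ne'⟩
  set P : ℕ := ∏ i, p i
  obtain ⟨v, hv⟩ := ZMod.intCast_surjective (e.symm ω)
  have hiff : ∀ n : ℤ, residues p n = ω ↔ n ≡ v [ZMOD (P : ℤ)] := by
    intro n
    have h1 : residues p n = e (n : ZMod P) := by
      funext i
      rw [map_intCast]
      rfl
    rw [h1, ← ZMod.intCast_eq_intCast_iff, hv]
    exact (e.toEquiv.eq_symm_apply).symm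
  have hcard : ((symmIoc x).filter fun n => residues p n = ω).card =
      ((Finset.Ioc ⌊-x⌋ ⌊x⌋).filter fun n => n ≡ v [ZMOD (P : ℤ)]).card := by
    rw [symmIoc]
    exact congrArg _ (Finset.filter_congr fun n _ => hiff n)
  have hform := Int.Ioc_filter_modEq_card ⌊-x⌋ ⌊x⌋ (r := (P : ℤ)) (by exact_mod_cast hPpos) v
  rw [hcard]
  have hPR : (0 : ℝ) < P := by exact_mod_cast hPpos
  have hPR1 : (1 : ℝ) ≤ P := by exact_mod_cast hPpos
  have hfl : ∀ a : ℤ, ⌊((a : ℚ) - v) / ((P : ℤ) : ℚ)⌋ = ⌊((a : ℝ) - v) / (P : ℝ)⌋ := by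
    intro a
    rw [← Rat.floor_cast (α := ℝ)]
    push_cast
    rfl
  rw [hfl, hfl] at hform
  have hformR : ((((Finset.Ioc ⌊-x⌋ ⌊x⌋).filter fun n => n ≡ v [ZMOD (P : ℤ)]).card : ℤ) : ℝ) =
      max ((⌊((⌊x⌋ : ℝ) - v) / (P : ℝ)⌋ : ℝ) - ⌊((⌊-x⌋ : ℝ) - v) / (P : ℝ)⌋) 0 := by
    rw [hform]
    push_cast
    rfl
  rw [Int.cast_natCast] at hformR
  rw [hformR]
  have a1 := Int.floor_le x
  have a2 := Int.lt_floor_add_one x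
  have a3 := Int.floor_le (-x)
  have a4 := Int.lt_floor_add_one (-x)
  have b1 := Int.floor_le (((⌊x⌋ : ℝ) - v) / (P : ℝ))
  have b2 := Int.lt_floor_add_one (((⌊x⌋ : ℝ) - v) / (P : ℝ))
  have b3 := Int.floor_le (((⌊-x⌋ : ℝ) - v) / (P : ℝ))
  have b4 := Int.lt_floor_add_one (((⌊-x⌋ : ℝ) - v) / (P : ℝ))
  have c : ((⌊x⌋ : ℝ) - v) / P - ((⌊-x⌋ : ℝ) - v) / P = ((⌊x⌋ : ℝ) - ⌊-x⌋) / P := by ring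
  have c1 : ((⌊x⌋ : ℝ) - ⌊-x⌋) / P ≤ (2 * x + 1) / P := by
    gcongr
    linarith
  have c2 : (2 * x - 1) / P ≤ ((⌊x⌋ : ℝ) - ⌊-x⌋) / P :=
    div_le_div_of_nonneg_right (by linarith) hPR.le
  have d1 : (2 * x + 1) / P + 1 ≤ 4 * x / P := by
    rw [div_add_one hPR.ne']
    gcongr
    linarith
  have d2 : x / P ≤ (2 * x - 1) / P - 1 := by
    rw [div_sub_one hPR.ne']
    gcongr
    linarith
  constructor
  · refine le_trans ?_ (le_max_left _ _)
    linarith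
  · have hx0 : 0 ≤ x := by linarith
    exact max_le (by linarith) (by positivity)

lemma card_residues_mem_eq_sum [Fintype ι] (x : ℝ) (S : Finset (∀ i, ZMod (p i))) :
    ((symmIoc x).filter fun n => residues p n ∈ S).card =
      ∑ ω ∈ S, ((symmIoc x).filter fun n => residues p n = ω).card := by
  rw [Finset.card_eq_sum_card_fiberwise (f := residues p) (t := S)
    (fun n hn => Finset.mem_coe.2 (Finset.mem_filter.1 (Finset.mem_coe.1 hn)).2)]
  refine Finset.sum_congr rfl fun ω hω => ?_
  rw [Finset.filter_filter]
  congr 1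
  refine Finset.filter_congr fun n _ => ⟨fun h => h.2, fun h => ⟨h ▸ hω, h⟩⟩

lemma le_card_residues_mem [Fintype ι] [∀ i, Fact (p i).Prime]
    (hp : Function.Injective p) {x : ℝ}
    (hx : ((∏ i, p i : ℕ) : ℝ) + 1 ≤ x) (S : Finset (∀ i, ZMod (p i))) :
    S.card * (x / (∏ i, p i : ℕ)) ≤
      (((symmIoc x).filter fun n => residues p n ∈ S).card : ℝ) := by
  rw [card_residues_mem_eq_sum, Nat.cast_sum, ← nsmul_eq_mul]
  exact Finset.card_nsmul_le_sum _ _ _ fun ω _ => (card_residues_eq_bounds p hp hx ω).1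

lemma card_residues_mem_le [Fintype ι] [∀ i, Fact (p i).Prime]
    (hp : Function.Injective p) {x : ℝ}
    (hx : ((∏ i, p i : ℕ) : ℝ) + 1 ≤ x) (S : Finset (∀ i, ZMod (p i))) :
    (((symmIoc x).filter fun n => residues p n ∈ S).card : ℝ) ≤
      S.card * (4 * x / (∏ i, p i : ℕ)) := by
  rw [card_residues_mem_eq_sum, Nat.cast_sum, ← nsmul_eq_mul]
  exact Finset.sum_le_card_nsmul _ _ _ fun ω _ => (card_residues_eq_bounds p hp hx ω).2

/-- The reciprocal of `p i` if `p i` exceeds `y`, and zero otherwise. -/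
noncomputable def largeInv (y : ℕ) (i : ι) : ℝ := if y < p i then 1 / (p i : ℝ) else 0

/-- The number of residue classes modulo `p i` that a tuple occupies. -/
def occupied {m : ℕ} (i : ι) (b : Fin m → ℤ) : ℕ :=
  (Finset.univ.image fun j => (b j : ZMod (p i))).card

/-- The number of coincidences of a tuple modulo each of the `p i` exceeding `y`,
weighted by `1 / p i`. -/
noncomputable def coincidence [Fintype ι] {m : ℕ} (y : ℕ) (b : Fin m → ℤ) : ℝ :=
  ∑ i, largeInv p y i * ((m - occupied p i b : ℕ) : ℝ)

/-- The integers in `(-x, x]` that are nonzero modulo each `p i`. -/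
noncomputable def sifted [Fintype ι] (x : ℝ) : Finset ℤ :=
  (symmIoc x).filter fun n => ∀ i, (n : ZMod (p i)) ≠ 0

lemma largeInv_nonneg (y : ℕ) (i : ι) : 0 ≤ largeInv p y i := by
  unfold largeInv
  split_ifs <;> positivity

lemma sum_largeInv_sq_le [Fintype ι] (hp : Function.Injective p) {y : ℕ} (hy : y ≠ 0) :
    ∑ i, largeInv p y i ^ 2 ≤ 1 / (y : ℝ) := by
  classical
  set K := y + ∑ i, p i
  calc ∑ i, largeInv p y i ^ 2
      = ∑ i with y < p i, (((p i : ℕ) : ℝ) ^ 2)⁻¹ := by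
        rw [Finset.sum_filter]
        refine Finset.sum_congr rfl fun i _ => ?_
        unfold largeInv
        split_ifs <;> simp
    _ = ∑ n ∈ (Finset.univ.filter fun i => y < p i).image p, ((n : ℝ) ^ 2)⁻¹ :=
        (Finset.sum_image (f := fun n : ℕ => ((n : ℝ) ^ 2)⁻¹) fun a _ b _ h => hp h).symm
    _ ≤ ∑ n ∈ Finset.Ioc y K, ((n : ℝ) ^ 2)⁻¹ := by
        refine Finset.sum_le_sum_of_subset_of_nonneg (fun n hn => ?_) fun _ _ _ => by positivity
        obtain ⟨i, hi, rfl⟩ := Finset.mem_image.1 hn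
        refine Finset.mem_Ioc.2 ⟨(Finset.mem_filter.1 hi).2, ?_⟩
        exact (Finset.single_le_sum (f := p) (fun _ _ => Nat.zero_le _)
          (Finset.mem_univ i)).trans (Nat.le_add_left _ _)
    _ ≤ (y : ℝ)⁻¹ - (K : ℝ)⁻¹ := sum_Ioc_inv_sq_le_sub hy (Nat.le_add_right _ _)
    _ ≤ 1 / (y : ℝ) := by
        rw [one_div]
        have : (0 : ℝ) ≤ (K : ℝ)⁻¹ := by positivity
        linarith

lemma unit_tuples_moment_le [∀ i, Fact (p i).Prime] {m y : ℕ} {q : ℝ} (hm : 1 ≤ m)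
    (hq : 1 ≤ q) (hy : 4 * q * m ≤ y)
    (i : ι) :
    ∑ s : Fin m → (ZMod (p i))ˣ,
        Real.exp (2 * q * largeInv p y i) ^ (m - (Finset.univ.image s).card) ≤
      (((p i : ℝ) - 1) * Real.exp (8 * q * m * largeInv p y i ^ 2)) ^ m := by
  have hp2 : (2 : ℝ) ≤ p i := by exact_mod_cast (Fact.out : (p i).Prime).two_le
  have hw := largeInv_nonneg p y i
  have hm1 : (1 : ℝ) ≤ m := by exact_mod_cast hm
  have hz : 1 ≤ Real.exp (2 * q * largeInv p y i) := Real.one_le_exp (by positivity)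
  refine (sum_pow_sub_card_image_le hz m).trans ?_
  rw [ZMod.card_units, Nat.cast_sub (Fact.out : (p i).Prime).one_le, Nat.cast_one]
  have h0 : 0 ≤ Real.exp (2 * q * largeInv p y i) - 1 := by linarith
  refine pow_le_pow_left₀ (add_nonneg (by linarith) (by positivity)) ?_ m
  have hexp := Real.add_one_le_exp (8 * q * m * largeInv p y i ^ 2)
  refine le_trans ?_ (mul_le_mul_of_nonneg_left hexp (by linarith))
  unfold largeInv
  split_ifs with h
  · have hyp : (y : ℝ) ≤ p i := by exact_mod_cast h.le
    have hp0 : (0 : ℝ) < p i := by linarith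
    have hsmall : |2 * q * (1 / (p i : ℝ))| ≤ 1 := by
      rw [abs_of_nonneg (by positivity), mul_one_div, div_le_one hp0]
      nlinarith
    have hE := (abs_le.1 (Real.abs_exp_sub_one_le hsmall)).2
    rw [abs_of_nonneg (by positivity)] at hE
    have hk : 2 * (2 * q * (1 / (p i : ℝ))) * m ≤
        ((p i : ℝ) - 1) * (8 * q * m * (1 / (p i : ℝ)) ^ 2) := by
      have : ((p i : ℝ) - 1) * (8 * q * m * (1 / (p i : ℝ)) ^ 2) -
          2 * (2 * q * (1 / (p i : ℝ))) * m = 4 * q * m * ((p i : ℝ) - 2) / (p i : ℝ) ^ 2 := by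
        field_simp
        ring
      have h2 : 0 ≤ 4 * q * m * ((p i : ℝ) - 2) / (p i : ℝ) ^ 2 :=
        div_nonneg (mul_nonneg (by positivity) (by linarith)) (by positivity)
      linarith
    have := mul_le_mul_of_nonneg_right hE (by positivity : (0 : ℝ) ≤ m)
    linarith
  · simp

/-- Few tuples of units have many coincidences modulo large primes. -/
lemma card_coincident_units_le [Fintype ι] [DecidableEq ι] [∀ i, Fact (p i).Prime]
    (hp : Function.Injective p) {m y : ℕ} {q : ℝ} (hm : 1 ≤ m)
    (hq : 1 ≤ q) (hy : 4 * q * m ≤ y) :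
    (((Finset.univ : Finset (Fin m → ∀ i, (ZMod (p i))ˣ)).filter fun r =>
        4 * (m : ℝ) < ∑ i, largeInv p y i *
          ((m - (Finset.univ.image fun j => r j i).card : ℕ) : ℝ)).card : ℝ) *
        Real.exp (8 * m * q) ≤
      (∏ i, ((p i : ℝ) - 1)) ^ m * Real.exp (2 * m) := by
  have hm1 : (1 : ℝ) ≤ m := by exact_mod_cast hm
  have hy0 : (0 : ℝ) < y := by nlinarith
  rw [← nsmul_eq_mul]
  calc _ ≤ ∑ r ∈ (Finset.univ : Finset (Fin m → ∀ i, (ZMod (p i))ˣ)).filter (fun r =>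
          4 * (m : ℝ) < ∑ i, largeInv p y i *
            ((m - (Finset.univ.image fun j => r j i).card : ℕ) : ℝ)),
        ∏ i, Real.exp (2 * q * largeInv p y i) ^
          (m - (Finset.univ.image fun j => r j i).card) := by
        refine Finset.card_nsmul_le_sum _ _ _ fun r hr => ?_
        have hr := (Finset.mem_filter.1 hr).2
        simp only [← Real.exp_nat_mul]
        rw [← Real.exp_sum, Real.exp_le_exp]
        calc 8 * (m : ℝ) * q = 2 * q * (4 * m) := by ring
          _ ≤ 2 * q * ∑ i, largeInv p y i *
            ((m - (Finset.univ.image fun j => r j i).card : ℕ) : ℝ) := by gcongr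
          _ = _ := by
            rw [Finset.mul_sum]
            exact Finset.sum_congr rfl fun i _ => by ring
    _ ≤ ∑ r : Fin m → ∀ i, (ZMod (p i))ˣ, ∏ i, Real.exp (2 * q * largeInv p y i) ^
          (m - (Finset.univ.image fun j => r j i).card) :=
        Finset.sum_le_sum_of_subset_of_nonneg (Finset.filter_subset _ _) fun _ _ _ =>
          Finset.prod_nonneg fun _ _ => by positivity
    _ = ∏ i, ∑ s : Fin m → (ZMod (p i))ˣ,
          Real.exp (2 * q * largeInv p y i) ^ (m - (Finset.univ.image s).card) := by
        rw [Fintype.prod_sum]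
        exact (Equiv.piComm fun (_ : Fin m) i => (ZMod (p i))ˣ).sum_comp fun s =>
          ∏ i, Real.exp (2 * q * largeInv p y i) ^ (m - (Finset.univ.image (s i)).card)
    _ ≤ ∏ i, (((p i : ℝ) - 1) * Real.exp (8 * q * m * largeInv p y i ^ 2)) ^ m :=
        Finset.prod_le_prod (fun _ _ => Finset.sum_nonneg fun _ _ => by positivity)
          fun i _ => unit_tuples_moment_le p hm hq hy i
    _ = (∏ i, ((p i : ℝ) - 1)) ^ m *
          Real.exp (m * (8 * q * m * ∑ i, largeInv p y i ^ 2)) := by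
        rw [Finset.prod_pow, Finset.prod_mul_distrib, mul_pow, ← Real.exp_sum, ← Finset.mul_sum,
          Real.exp_nat_mul]
    _ ≤ _ := by
        have hφ : 0 ≤ (∏ i, ((p i : ℝ) - 1)) ^ m := pow_nonneg (Finset.prod_nonneg fun i _ => by
          have : (1 : ℝ) ≤ p i := by exact_mod_cast (Fact.out : (p i).Prime).one_le
          linarith) _
        refine mul_le_mul_of_nonneg_left (Real.exp_le_exp.2 ?_) hφ
        have hs := sum_largeInv_sq_le p hp (y := y) (by rintro rfl; simp at hy0)
        calc m * (8 * q * m * ∑ i, largeInv p y i ^ 2) ≤ m * (8 * q * m * (1 / y)) := by gcongr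
          _ = 2 * m * ((4 * q * m) / y) := by ring
          _ ≤ 2 * m * 1 := by
            gcongr
            rwa [div_le_one hy0]
          _ = 2 * m := by ring

lemma occupied_le [∀ i, Fact (p i).Prime] {m : ℕ} (i : ι) (b : Fin m → ℤ) :
    occupied p i b ≤ m ∧ occupied p i b ≤ p i := by
  unfold occupied
  constructor
  · simpa using Finset.card_image_le (s := Finset.univ) (f := fun j => (b j : ZMod (p i)))
  · simpa [ZMod.card] using Finset.card_le_univ (Finset.univ.image fun j => (b j : ZMod (p i)))

lemma one_le_occupied {m : ℕ} (hm : 1 ≤ m) (i : ι) (b : Fin m → ℤ) : 1 ≤ occupied p i b :=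
  Finset.card_pos.2 ⟨_, Finset.mem_image_of_mem _ (Finset.mem_univ ⟨0, hm⟩)⟩

lemma occupied_add_const {m : ℕ} (i : ι) (b : Fin m → ℤ) (t : ℤ) :
    occupied p i (fun j => b j + t) = occupied p i b := by
  unfold occupied
  have h := Finset.card_image_of_injective (Finset.univ.image fun j => (b j : ZMod (p i)))
    (add_left_injective (t : ZMod (p i)))
  rw [Finset.image_image] at h
  rw [← h]
  congr 2
  funext j
  simp

lemma coincidence_add_const [Fintype ι] {m : ℕ} (y : ℕ) (b : Fin m → ℤ) (t : ℤ) :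
    coincidence p y (fun j => b j + t) = coincidence p y b := by
  simp only [coincidence, occupied_add_const]

/-- Few tuples of sifted integers have many coincidences modulo large primes. -/
lemma card_coincident_sifted_le [Fintype ι] [∀ i, Fact (p i).Prime] (hp : Function.Injective p)
    {m y : ℕ} {q x : ℝ} (hm : 1 ≤ m) (hq : 1 ≤ q) (hy : 4 * q * m ≤ y)
    (hx : ((∏ i, p i : ℕ) : ℝ) + 1 ≤ x) :
    (((Fintype.piFinset fun _ : Fin m => sifted p x).filter fun h =>
        4 * (m : ℝ) < coincidence p y h).card : ℝ) ≤
      (4 * x / (∏ i, p i : ℕ)) ^ m *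
        ((∏ i, ((p i : ℝ) - 1)) ^ m * Real.exp (2 * m) * Real.exp (-(8 * m * q))) := by
  classical
  set R := (Finset.univ : Finset (Fin m → ∀ i, (ZMod (p i))ˣ)).filter fun r =>
        4 * (m : ℝ) < ∑ i, largeInv p y i *
          ((m - (Finset.univ.image fun j => r j i).card : ℕ) : ℝ)
  have hRcard : (R.card : ℝ) ≤
      (∏ i, ((p i : ℝ) - 1)) ^ m * Real.exp (2 * m) * Real.exp (-(8 * m * q)) := by
    rw [Real.exp_neg, ← div_eq_mul_inv, le_div_iff₀ (Real.exp_pos _)]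
    exact card_coincident_units_le p hp hm hq hy
  have hx0 : 0 ≤ x := by
    have : (0 : ℝ) ≤ ((∏ i, p i : ℕ) : ℝ) := Nat.cast_nonneg _
    linarith
  let fib : (Fin m → ∀ i, (ZMod (p i))ˣ) → Finset (Fin m → ℤ) := fun r =>
    Fintype.piFinset fun j =>
      (symmIoc x).filter fun n => residues p n = fun i => (r j i : ZMod (p i))
  have hsub : ((Fintype.piFinset fun _ : Fin m => sifted p x).filter fun h =>
      4 * (m : ℝ) < coincidence p y h) ⊆ R.biUnion fib := by
    intro h hh
    obtain ⟨hh1, hh2⟩ := Finset.mem_filter.1 hh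
    have hs : ∀ j, h j ∈ symmIoc x ∧ ∀ i, (h j : ZMod (p i)) ≠ 0 := fun j =>
      Finset.mem_filter.1 (Fintype.mem_piFinset.1 hh1 j)
    refine Finset.mem_biUnion.2 ⟨fun j i => Units.mk0 (h j : ZMod (p i)) ((hs j).2 i), ?_, ?_⟩
    · refine Finset.mem_filter.2 ⟨Finset.mem_univ _, lt_of_lt_of_eq hh2 ?_⟩
      refine Finset.sum_congr rfl fun i _ => ?_
      have : occupied p i h = (Finset.univ.image fun j =>
          Units.mk0 (h j : ZMod (p i)) ((hs j).2 i)).card := by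
        rw [occupied, ← Finset.card_image_of_injective _ Units.val_injective,
          Finset.image_image]
        rfl
      rw [this]
    · exact Fintype.mem_piFinset.2 fun j => Finset.mem_filter.2 ⟨(hs j).1, rfl⟩
  calc _ ≤ ((R.biUnion fib).card : ℝ) := by exact_mod_cast Finset.card_le_card hsub
    _ ≤ ∑ r ∈ R, ((fib r).card : ℝ) := by exact_mod_cast Finset.card_biUnion_le
    _ ≤ R.card • (4 * x / (∏ i, p i : ℕ)) ^ m := by
        refine Finset.sum_le_card_nsmul _ _ _ fun r _ => ?_
        rw [Fintype.card_piFinset, Nat.cast_prod]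
        refine (Finset.prod_le_prod (fun _ _ => Nat.cast_nonneg _) fun j _ =>
          (card_residues_eq_bounds p hp hx _).2).trans (le_of_eq ?_)
        rw [Finset.prod_const, Finset.card_univ, Fintype.card_fin]
    _ ≤ _ := by
        rw [nsmul_eq_mul, mul_comm]
        gcongr

lemma le_card_sifted [Fintype ι] [∀ i, Fact (p i).Prime] (hp : Function.Injective p)
    {x : ℝ} (hx : ((∏ i, p i : ℕ) : ℝ) + 1 ≤ x) :
    (∏ i, ((p i : ℝ) - 1)) * (x / (∏ i, p i : ℕ)) ≤ ((sifted p x).card : ℝ) := by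
  classical
  refine le_trans (le_of_eq ?_) ((le_card_residues_mem p hp hx
    (Fintype.piFinset fun i => Finset.univ.erase (0 : ZMod (p i)))).trans (le_of_eq ?_))
  · symm
    rw [Fintype.card_piFinset, Nat.cast_prod]
    congr 1
    refine Finset.prod_congr rfl fun i _ => ?_
    rw [Finset.card_erase_of_mem (Finset.mem_univ _), Finset.card_univ, ZMod.card,
      Nat.cast_sub (Fact.out : (p i).Prime).one_le, Nat.cast_one]
  · congr 2
    refine Finset.filter_congr fun n _ => ?_
    simp [residues]

/-- Bound for the number of translates of a tuple all of whose entries are sifted. -/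
lemma card_sifted_translates_le [Fintype ι] [∀ i, Fact (p i).Prime] (hp : Function.Injective p)
    {m : ℕ} {x : ℝ} (hx : ((∏ i, p i : ℕ) : ℝ) + 1 ≤ x) (b : Fin m → ℤ) :
    (((symmIoc x).filter fun t => ∀ j, b j - t ∈ sifted p x).card : ℝ) ≤
      (∏ i, ((p i : ℝ) - occupied p i b)) * (4 * x / (∏ i, p i : ℕ)) := by
  classical
  refine le_trans ?_ ((card_residues_mem_le p hp hx (Fintype.piFinset fun i =>
    (Finset.univ.image fun j => (b j : ZMod (p i)))ᶜ)).trans (le_of_eq ?_))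
  · refine Nat.cast_le.2 (Finset.card_le_card fun t ht => ?_)
    obtain ⟨ht1, ht2⟩ := Finset.mem_filter.1 ht
    refine Finset.mem_filter.2 ⟨ht1, Fintype.mem_piFinset.2 fun i => ?_⟩
    rw [Finset.mem_compl, Finset.mem_image]
    rintro ⟨j, -, hj⟩
    refine (Finset.mem_filter.1 (ht2 j)).2 i ?_
    rw [Int.cast_sub, sub_eq_zero]
    exact hj
  · rw [Fintype.card_piFinset, Nat.cast_prod]
    congr 1
    refine Finset.prod_congr rfl fun i _ => ?_
    rw [Finset.card_compl, ZMod.card]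
    exact Nat.cast_sub (occupied_le p i b).2

/-- The product of the `(1 - 1 / p i)⁻¹` over the `p i` not exceeding `y`. -/
noncomputable def smallFactor [Fintype ι] (y : ℕ) : ℝ :=
  ∏ i, if p i ≤ y then (1 - 1 / (p i : ℝ))⁻¹ else 1

lemma smallFactor_nonneg [Fintype ι] [∀ i, Fact (p i).Prime] (y : ℕ) : 0 ≤ smallFactor p y :=
  Finset.prod_nonneg fun i _ => by
    have hp1 : (1 : ℝ) ≤ p i := by exact_mod_cast (Fact.out : (p i).Prime).one_le
    split_ifs
    · exact inv_nonneg.2 (sub_nonneg.2 ((div_le_one (by linarith)).2 hp1))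
    · exact zero_le_one

lemma prod_sub_occupied_le [Fintype ι] [∀ i, Fact (p i).Prime] {m : ℕ} (hm : 1 ≤ m) (y : ℕ)
    (b : Fin m → ℤ) :
    ∏ i, ((p i : ℝ) - occupied p i b) ≤
      ((∏ i, p i : ℕ) : ℝ) * ((∏ i, ((p i : ℝ) - 1)) / (∏ i, p i : ℕ)) ^ m *
        smallFactor p y ^ (m - 1) * Real.exp (2 * coincidence p y b) := by
  rw [coincidence, Finset.mul_sum, Real.exp_sum, smallFactor, ← Finset.prod_pow, Nat.cast_prod,
    ← Finset.prod_div_distrib, ← Finset.prod_pow, ← Finset.prod_mul_distrib,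
    ← Finset.prod_mul_distrib, ← Finset.prod_mul_distrib]
  refine Finset.prod_le_prod (fun i _ => sub_nonneg.2 (by exact_mod_cast (occupied_le p i b).2))
    fun i _ => ?_
  have hp2 : (2 : ℝ) ≤ p i := by exact_mod_cast (Fact.out : (p i).Prime).two_le
  have hp0 : (0 : ℝ) < p i := by linarith
  have hinv : 1 / (p i : ℝ) ≤ 1 / 2 := one_div_le_one_div_of_le (by norm_num) hp2
  have hinv0 : 0 < 1 / (p i : ℝ) := by positivity
  set a := 1 - 1 / (p i : ℝ) with ha
  have ha0 : 0 < a := by linarith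
  have ha1 : a ≤ 1 := by linarith
  have hdiv : ((p i : ℝ) - 1) / p i = a := by rw [ha, sub_div, div_self hp0.ne']
  set ν := occupied p i b
  have hνm : ν ≤ m := (occupied_le p i b).1
  have hν1 : 1 ≤ ν := one_le_occupied p hm i b
  have hbern : (p i : ℝ) - ν ≤ p i * a ^ ν := by
    have := one_add_mul_le_pow (a := -(1 / (p i : ℝ))) (by linarith) ν
    calc (p i : ℝ) - ν = p i * (1 + ν * -(1 / (p i : ℝ))) := by field_simp; ring
      _ ≤ p i * a ^ ν := by
        gcongr
        rw [ha, sub_eq_add_neg]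
        exact this
  rw [hdiv]
  refine hbern.trans ?_
  rw [mul_assoc, mul_assoc]
  refine mul_le_mul_of_nonneg_left ?_ hp0.le
  have hsplit : a ^ m = a ^ ν * a ^ (m - ν) := by rw [← pow_add, Nat.add_sub_cancel' hνm]
  have hone : a ^ ν * 1 ≤ a ^ ν * (a ^ (m - ν) * ((if p i ≤ y then a⁻¹ else 1) ^ (m - 1) *
      Real.exp (2 * (largeInv p y i * ((m - ν : ℕ) : ℝ))))) := by
    refine mul_le_mul_of_nonneg_left ?_ (by positivity)
    by_cases h : p i ≤ y
    · rw [if_pos h, largeInv, if_neg (by omega), zero_mul, mul_zero, Real.exp_zero, mul_one,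
        inv_pow, ← div_eq_mul_inv, le_div_iff₀ (by positivity), one_mul]
      exact pow_le_pow_of_le_one ha0.le ha1 (by omega)
    · rw [if_neg h, largeInv, if_pos (by omega), one_pow, one_mul,
        show 2 * (1 / (p i : ℝ) * ((m - ν : ℕ) : ℝ)) = ((m - ν : ℕ) : ℝ) * (2 * (1 / (p i : ℝ))) by
          ring, Real.exp_nat_mul, ← mul_pow]
      refine one_le_pow₀ ?_
      have := Real.add_one_le_exp (2 * (1 / (p i : ℝ)))
      nlinarith
  rw [hsplit]
  linarith

/-- A translation-invariant set containing many sifted tuples contains many tuples. -/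
theorem card_translation_invariant_ge [Fintype ι] [∀ i, Fact (p i).Prime]
    (hp : Function.Injective p) {m y : ℕ} {q x δ : ℝ} (hm : 1 ≤ m) (hq : 1 ≤ q)
    (hy : 4 * q * m ≤ y) (hx : ((∏ i, p i : ℕ) : ℝ) + 1 ≤ x)
    (hδ : 4 ^ m * Real.exp (2 * m) * Real.exp (-(8 * m * q)) ≤ δ / 2)
    (A : Set (Fin m → ℤ)) [DecidablePred (· ∈ A)]
    (hA : ∀ h ∈ A, ∀ t : ℤ, (fun i => h i + t) ∈ A)
    (hcard : δ * ((sifted p x).card : ℝ) ^ m ≤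
      (((Fintype.piFinset fun _ : Fin m => sifted p x).filter (· ∈ A)).card : ℝ)) :
    δ * x ^ m ≤ 8 * smallFactor p y ^ (m - 1) * Real.exp (8 * m) *
      (((Fintype.piFinset fun _ : Fin m => symmIoc (2 * x)).filter (· ∈ A)).card : ℝ) := by
  classical
  set P : ℝ := ((∏ i, p i : ℕ) : ℝ) with hP
  set φ : ℝ := ∏ i, ((p i : ℝ) - 1)
  have hPpos : 0 < P := by
    rw [hP]
    exact_mod_cast Finset.prod_pos fun i _ => (Fact.out : (p i).Prime).pos
  have hφpos : 0 < φ := Finset.prod_pos fun i _ => by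
    have : (2 : ℝ) ≤ p i := by exact_mod_cast (Fact.out : (p i).Prime).two_le
    linarith
  have hxpos : 0 < x := by linarith
  set T := Fintype.piFinset fun _ : Fin m => sifted p x
  set B := (Fintype.piFinset fun _ : Fin m => symmIoc (2 * x)).filter (· ∈ A)
  set G := T.filter fun h => h ∈ A ∧ coincidence p y h ≤ 4 * m
  set E := smallFactor p y ^ (m - 1)
  have hE0 : 0 ≤ E := pow_nonneg (smallFactor_nonneg p y) _
  have hN := le_card_sifted p hp hx
  have hNm : (φ * (x / P)) ^ m ≤ ((sifted p x).card : ℝ) ^ m :=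
    pow_le_pow_left₀ (by positivity) hN m
  have hbad : ((T.filter fun h => 4 * (m : ℝ) < coincidence p y h).card : ℝ) ≤
      δ / 2 * ((sifted p x).card : ℝ) ^ m := by
    refine (card_coincident_sifted_le p hp hm hq hy hx).trans ?_
    have h0 : 0 ≤ δ / 2 := le_trans (by positivity) hδ
    calc (4 * x / P) ^ m * (φ ^ m * Real.exp (2 * m) * Real.exp (-(8 * m * q)))
        = 4 ^ m * Real.exp (2 * m) * Real.exp (-(8 * m * q)) * (φ * (x / P)) ^ m := by
          rw [mul_div_assoc, mul_pow, mul_pow]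
          ring
      _ ≤ δ / 2 * ((sifted p x).card : ℝ) ^ m := by gcongr
  have hgood : δ / 2 * (φ * (x / P)) ^ m ≤ (G.card : ℝ) := by
    have hsub : T.filter (· ∈ A) ⊆ G ∪ T.filter fun h => 4 * (m : ℝ) < coincidence p y h := by
      intro h hh
      obtain ⟨h1, h2⟩ := Finset.mem_filter.1 hh
      rcases le_or_gt (coincidence p y h) (4 * m) with h3 | h3
      · exact Finset.mem_union_left _ (Finset.mem_filter.2 ⟨h1, h2, h3⟩)
      · exact Finset.mem_union_right _ (Finset.mem_filter.2 ⟨h1, h3⟩)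
    have hle : ((T.filter (· ∈ A)).card : ℝ) ≤
        G.card + (T.filter fun h => 4 * (m : ℝ) < coincidence p y h).card := by
      exact_mod_cast (Finset.card_le_card hsub).trans (Finset.card_union_le _ _)
    have h0 : 0 ≤ δ / 2 := le_trans (by positivity) hδ
    have := mul_le_mul_of_nonneg_left hNm h0
    linarith
  have hJ : x ≤ ((symmIoc x).card : ℝ) := by
    have := le_card_residues_mem p hp hx Finset.univ
    rw [Finset.card_univ, Fintype.card_pi] at this
    simp only [ZMod.card, Finset.mem_univ, Finset.filter_true] at this
    rwa [mul_div_cancel₀] at this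
    exact hPpos.ne'
  have hmaps : ∀ a ∈ G ×ˢ symmIoc x, (fun j => a.1 j + a.2) ∈
      B.filter fun b => coincidence p y b ≤ 4 * m := by
    rintro ⟨h, t⟩ ht
    obtain ⟨hh, ht⟩ := Finset.mem_product.1 ht
    obtain ⟨h1, h2, h3⟩ := Finset.mem_filter.1 hh
    refine Finset.mem_filter.2 ⟨Finset.mem_filter.2 ⟨Fintype.mem_piFinset.2 fun j => ?_,
      hA h h2 t⟩, ?_⟩
    · have hj := mem_symmIoc.1 (Finset.mem_filter.1 (Fintype.mem_piFinset.1 h1 j)).1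
      have ht' := mem_symmIoc.1 ht
      rw [mem_symmIoc]
      push_cast
      constructor <;> linarith [hj.1, hj.2, ht'.1, ht'.2]
    · rw [coincidence_add_const]
      exact h3
  have hfib : ∀ b ∈ B.filter fun b => coincidence p y b ≤ 4 * m,
      (((G ×ˢ symmIoc x).filter fun a => (fun j => a.1 j + a.2) = b).card : ℝ) ≤
        P * (φ / P) ^ m * E * Real.exp (8 * m) * (4 * x / P) := by
    intro b hb
    have hinj : ((G ×ˢ symmIoc x).filter fun a => (fun j => a.1 j + a.2) = b).card ≤
        ((symmIoc x).filter fun t => ∀ j, b j - t ∈ sifted p x).card := by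
      refine Finset.card_le_card_of_injOn Prod.snd ?_ ?_
      · rintro ⟨h, t⟩ ha
        obtain ⟨hprod, rfl⟩ := Finset.mem_filter.1 (Finset.mem_coe.1 ha)
        obtain ⟨hh, ht⟩ := Finset.mem_product.1 hprod
        refine Finset.mem_coe.2 (Finset.mem_filter.2 ⟨ht, fun j => ?_⟩)
        simpa using Fintype.mem_piFinset.1 (Finset.mem_filter.1 hh).1 j
      · rintro ⟨h, t⟩ ha ⟨h', t'⟩ ha' htt
        have e1 := (Finset.mem_filter.1 (Finset.mem_coe.1 ha)).2
        have e2 := (Finset.mem_filter.1 (Finset.mem_coe.1 ha')).2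
        obtain rfl : t = t' := htt
        refine Prod.ext (funext fun j => ?_) rfl
        have := congrFun (e1.trans e2.symm) j
        simpa using this
    calc _ ≤ (((symmIoc x).filter fun t => ∀ j, b j - t ∈ sifted p x).card : ℝ) := by
          exact_mod_cast hinj
      _ ≤ _ := card_sifted_translates_le p hp hx b
      _ ≤ (P * (φ / P) ^ m * E * Real.exp (2 * coincidence p y b)) * (4 * x / P) :=
          mul_le_mul_of_nonneg_right (prod_sub_occupied_le p hm y b) (by positivity)
      _ ≤ _ := by
          have hexp : Real.exp (2 * coincidence p y b) ≤ Real.exp (8 * m) :=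
            Real.exp_le_exp.2 (by linarith [(Finset.mem_filter.1 hb).2])
          gcongr
  have hcount : (G.card : ℝ) * (symmIoc x).card ≤
      B.card * (P * (φ / P) ^ m * E * Real.exp (8 * m) * (4 * x / P)) := by
    rw [← Nat.cast_mul, ← Finset.card_product, Finset.card_eq_sum_card_fiberwise
      (f := fun a : (Fin m → ℤ) × ℤ => fun j => a.1 j + a.2) (fun a ha => hmaps a ha),
      Nat.cast_sum]
    refine (Finset.sum_le_card_nsmul _ _ _ hfib).trans ?_
    rw [nsmul_eq_mul]
    gcongr
    exact Finset.filter_subset _ _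
  have hδ0 : 0 ≤ δ / 2 := le_trans (by positivity) hδ
  have hfinal : δ / 2 * (φ * (x / P)) ^ m * x ≤
      B.card * (P * (φ / P) ^ m * E * Real.exp (8 * m) * (4 * x / P)) :=
    (mul_le_mul hgood hJ hxpos.le (Nat.cast_nonneg _)).trans hcount
  have hpos : 0 < (φ / P) ^ m * x / 2 := by positivity
  refine le_of_mul_le_mul_left ?_ hpos
  calc (φ / P) ^ m * x / 2 * (δ * x ^ m) = δ / 2 * (φ * (x / P)) ^ m * x := by
        rw [show φ * (x / P) = φ / P * x by ring, mul_pow]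
        ring
    _ ≤ _ := hfinal
    _ = _ := by
        field_simp
        ring

end Residues

lemma mem_sifted_primesLE_iff (k : ℕ) (x : ℝ) (n : ℤ) :
    n ∈ sifted (fun i : Nat.primesLE k => (i : ℕ)) x ↔ n ∈ Nset k x := by
  rw [sifted, Finset.mem_filter, mem_symmIoc, Nset, Set.mem_ofPred_eq, and_assoc,
    ← Int.isCoprime_iff_gcd_eq_one, Nat.cast_prod, IsCoprime.prod_right_iff]
  refine and_congr_right fun _ => and_congr_right fun _ => ?_
  rw [Subtype.forall]
  refine forall₂_congr fun r hr => ?_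
  have hr' := Nat.prime_iff_prime_int.1 (Nat.prime_of_mem_primesLE hr)
  rw [isCoprime_comm, hr'.irreducible.coprime_iff_not_dvd, Ne, ZMod.intCast_zmod_eq_zero_iff_dvd]

lemma smallFactor_primesLE_le (k : ℕ) {y : ℕ} (hy : 2 ≤ y) :
    smallFactor (fun i : Nat.primesLE k => (i : ℕ)) y ≤ 3 * Real.exp 6 * Real.log y := by
  refine le_trans ?_ (prod_primesLE_one_sub_inv_inv_le hy)
  have hone : ∀ r ∈ Nat.primesLE y, 1 ≤ (1 - 1 / (r : ℝ))⁻¹ := by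
    intro r hr
    have hr2 : (2 : ℝ) ≤ r := by exact_mod_cast Nat.two_le_of_mem_primesLE hr
    have hinv : 1 / (r : ℝ) ≤ 1 / 2 := one_div_le_one_div_of_le (by norm_num) hr2
    have hinv0 : 0 < 1 / (r : ℝ) := by positivity
    exact (one_le_inv₀ (by linarith)).2 (by linarith)
  have hsub : (Nat.primesLE k).filter (· ≤ y) ⊆ Nat.primesLE y := fun r hr => by
    obtain ⟨h1, h2⟩ := Finset.mem_filter.1 hr
    exact Nat.mem_primesLE.2 ⟨h2, Nat.prime_of_mem_primesLE h1⟩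
  rw [smallFactor, Finset.prod_coe_sort (Nat.primesLE k)
    (fun r : ℕ => if r ≤ y then (1 - 1 / (r : ℝ))⁻¹ else 1), ← Finset.prod_filter,
    ← Finset.prod_sdiff hsub]
  refine le_mul_of_one_le_left
    (Finset.prod_nonneg fun r hr => zero_le_one.trans (hone r (hsub hr))) ?_
  exact Finset.prod_induction _ (1 ≤ ·) (fun _ _ => one_le_mul_of_one_le_of_one_le) le_rfl
    fun r hr => hone r (Finset.mem_sdiff.1 hr).1

lemma choose_pred_le {m k : ℕ} (hm : 1 ≤ m) (hk : m ≤ k) :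
    (Nat.choose (k - 1) (m - 1) : ℝ) ≤ 3 ^ m * (k / m : ℝ) ^ (m - 1) := by
  obtain ⟨m, rfl⟩ := Nat.exists_eq_add_of_le' hm
  obtain ⟨k, rfl⟩ := Nat.exists_eq_add_of_le' (hm.trans hk)
  simp only [Nat.add_sub_cancel]
  have hid : ((k + 1 : ℕ) : ℝ) * k.choose m = (k + 1).choose (m + 1) * ((m + 1 : ℕ) : ℝ) := by
    exact_mod_cast Nat.add_one_mul_choose_eq k m
  have hch : ((k + 1).choose (m + 1) : ℝ) ≤
      ((k + 1 : ℕ) : ℝ) ^ (m + 1) / (m + 1).factorial := Nat.choose_le_pow_div (m + 1) (k + 1)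
  have hfac : ((m + 1 : ℕ) : ℝ) ^ (m + 1) / (m + 1).factorial ≤ 3 ^ (m + 1) := by
    refine (Real.pow_div_factorial_le_exp _ (Nat.cast_nonneg _) _).trans ?_
    rw [← Real.exp_one_pow]
    exact pow_le_pow_left₀ (Real.exp_pos _).le (by linarith [Real.exp_one_lt_d9]) _
  set K : ℝ := ((k + 1 : ℕ) : ℝ)
  set M : ℝ := ((m + 1 : ℕ) : ℝ)
  have hK : 0 < K := by positivity
  have hM : 0 < M := by positivity
  have hF : (0 : ℝ) < (m + 1).factorial := by exact_mod_cast Nat.factorial_pos _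
  calc (k.choose m : ℝ) = (k + 1).choose (m + 1) * M / K := by
        rw [eq_div_iff hK.ne', ← hid]
        ring
    _ ≤ K ^ (m + 1) / (m + 1).factorial * M / K := by gcongr
    _ = M ^ (m + 1) / (m + 1).factorial * (K / M) ^ m := by
        rw [div_pow]
        field_simp
        ring
    _ ≤ 3 ^ (m + 1) * (K / M) ^ m := by gcongr

lemma exp_bound_le_density {m k : ℕ} (hm : 1 ≤ m) (hk : m ≤ k) :
    4 ^ m * Real.exp (2 * m) * Real.exp (-(8 * m * Real.log (3 * k / m))) ≤
      1 / (8 * m * Nat.choose (k - 1) (m - 1) : ℝ) / 2 := by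
  have hm0 : (0 : ℝ) < m := by exact_mod_cast hm
  have hk0 : (0 : ℝ) < k := by exact_mod_cast hm.trans hk
  have hkm : (1 : ℝ) ≤ k / m := (one_le_div hm0).2 (by exact_mod_cast hk)
  have hC : (0 : ℝ) < Nat.choose (k - 1) (m - 1) := by
    exact_mod_cast Nat.choose_pos (Nat.sub_le_sub_right hk 1)
  have hq1 : 1 ≤ Real.log (3 * k / m) := by
    rw [Real.le_log_iff_exp_le (by positivity), mul_div_assoc]
    nlinarith [Real.exp_one_lt_d9]
  set q := Real.log (3 * k / m) with hq
  have hexpq : Real.exp q = 3 * (k / m) := by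
    rw [hq, Real.exp_log (by positivity), mul_div_assoc]
  have hchoose : (Nat.choose (k - 1) (m - 1) : ℝ) ≤ Real.exp q ^ m := by
    refine (choose_pred_le hm hk).trans ?_
    rw [hexpq, mul_pow]
    gcongr
    omega
  have h16 : 16 * (m : ℝ) ≤ 32 ^ m := by
    have h1 : (m : ℝ) ≤ 2 ^ m := by exact_mod_cast Nat.lt_two_pow_self.le
    have h2 : (16 : ℝ) ≤ 16 ^ m := le_self_pow₀ (by norm_num) (by omega)
    calc 16 * (m : ℝ) ≤ 16 ^ m * 2 ^ m := by gcongr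
      _ = 32 ^ m := by rw [← mul_pow]; norm_num
  have h128 : (128 : ℝ) ≤ Real.exp 5 := by
    have h := Real.exp_one_gt_d9
    calc (128 : ℝ) ≤ 2.7182818283 ^ 5 := by norm_num
      _ ≤ Real.exp 1 ^ 5 := by gcongr
      _ = Real.exp 5 := by rw [← Real.exp_nat_mul]; norm_num
  rw [div_div, Real.exp_neg, ← div_eq_mul_inv, div_le_div_iff₀ (Real.exp_pos _) (by positivity),
    one_mul]
  calc 4 ^ m * Real.exp (2 * m) * (8 * m * Nat.choose (k - 1) (m - 1) * 2)
      = 4 ^ m * Real.exp (2 * m) * ((16 * m) * Nat.choose (k - 1) (m - 1)) := by ring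
    _ ≤ 4 ^ m * Real.exp (2 * m) * (32 ^ m * Real.exp q ^ m) := by gcongr
    _ = (128 * Real.exp 2 * Real.exp q) ^ m := by
        rw [mul_comm 2 (m : ℝ), Real.exp_nat_mul, ← mul_pow, ← mul_pow, ← mul_pow]
        ring
    _ ≤ (Real.exp 5 * Real.exp 2 * Real.exp q) ^ m := by gcongr
    _ ≤ Real.exp (8 * q) ^ m := by
        rw [← Real.exp_add, ← Real.exp_add]
        gcongr
        linarith
    _ = Real.exp (8 * m * q) := by
        rw [← Real.exp_nat_mul]
        ring_nf

lemma log_ceil_le {m : ℕ} {q : ℝ} (hm : 1 ≤ m) (hq : Real.log 3 ≤ q) :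
    Real.log (⌈4 * q * m⌉₊ : ℕ) ≤
      (1 + 2 / Real.log (Real.log 3)) * (Real.log q * Real.log (3 * m)) := by
  have hm1 : (1 : ℝ) ≤ m := by exact_mod_cast hm
  have hl3 : 1 < Real.log 3 := by
    rw [Real.lt_log_iff_exp_lt (by norm_num)]
    linarith [Real.exp_one_lt_d9]
  have hq1 : 1 < q := by linarith
  have hll : 0 < Real.log (Real.log 3) := Real.log_pos hl3
  have hlq : Real.log (Real.log 3) ≤ Real.log q := Real.log_le_log (by linarith) hq
  have hΛ : Real.log 3 ≤ Real.log (3 * m) := Real.log_le_log (by norm_num) (by linarith)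
  have hqm : 1 ≤ q * m := by nlinarith
  have hceil : ((⌈4 * q * m⌉₊ : ℕ) : ℝ) ≤ q * (3 * m) ^ 2 := by
    have := (Nat.ceil_lt_add_one (by positivity : 0 ≤ 4 * q * m)).le
    nlinarith [mul_le_mul_of_nonneg_left hm1 (by positivity : 0 ≤ q * m)]
  have hpos : (0 : ℝ) < (⌈4 * q * m⌉₊ : ℕ) := by
    exact_mod_cast Nat.ceil_pos.2 (by positivity)
  have h1 : Real.log (⌈4 * q * m⌉₊ : ℕ) ≤ Real.log q + 2 * Real.log (3 * m) := by
    refine (Real.log_le_log hpos hceil).trans (le_of_eq ?_)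
    rw [Real.log_mul (by positivity) (by positivity), Real.log_pow]
    norm_num
  have h2 : 2 * Real.log (3 * m) ≤
      2 / Real.log (Real.log 3) * (Real.log q * Real.log (3 * m)) := by
    rw [div_mul_eq_mul_div, le_div_iff₀ hll]
    nlinarith
  nlinarith

lemma pow_mul_pow_le_rpow {F Λ : ℝ} (hF : 1 ≤ F) (hΛ : Real.log 3 ≤ Λ) (m : ℕ) :
    F ^ m * Λ ^ m ≤ Λ ^ ((1 + Real.log F / Real.log (Real.log 3)) * m) := by
  have hl3 : 1 < Real.log 3 := by
    rw [Real.lt_log_iff_exp_lt (by norm_num)]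
    linarith [Real.exp_one_lt_d9]
  have hll : 0 < Real.log (Real.log 3) := Real.log_pos hl3
  have hΛ0 : 0 < Λ := by linarith
  have hFΛ : F ≤ Λ ^ (Real.log F / Real.log (Real.log 3)) := by
    have h0 : 0 ≤ Real.log F := Real.log_nonneg hF
    calc F = Real.log 3 ^ (Real.log F / Real.log (Real.log 3)) := by
          rw [Real.rpow_def_of_pos (by linarith), mul_div_cancel₀ _ hll.ne',
            Real.exp_log (by linarith)]
      _ ≤ _ := Real.rpow_le_rpow (by linarith) hΛ (by positivity)
  rw [Real.rpow_mul_natCast hΛ0.le, Real.rpow_add hΛ0, Real.rpow_one, ← mul_pow, mul_comm Λ]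
  gcongr

theorem stmt_14 : ∃ c : ℝ, 0 < c ∧ ∀ m k : ℕ, 1 ≤ m → m ≤ k →
    ∃ x₀ : ℝ, ∀ x : ℝ, x₀ ≤ x →
      ∀ A : Set (Fin m → ℤ),
        (∀ h ∈ A, ∀ t : ℤ, (fun i => h i + t) ∈ A) →
        (∀ h ∈ A, ∀ σ : Equiv.Perm (Fin m), (h ∘ σ) ∈ A) →
        1 / (8 * m * Nat.choose (k - 1) (m - 1) : ℝ) <
          (Nat.card {h : Fin m → ℤ // h ∈ A ∧ ∀ i, h i ∈ Nset k x} : ℝ) /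
            (Nat.card (Nset k x) : ℝ) ^ m →
        (Real.log (3 * m)) ^ (-(c * m)) * x ^ m /
            ((k / m : ℝ) * Real.log (Real.log (3 * k / m))) ^ (m - 1) ≤
          (Nat.card {h : Fin m → ℤ //
            h ∈ A ∧ ∀ i, -(2 * x) < (h i : ℝ) ∧ (h i : ℝ) ≤ 2 * x} : ℝ) := by
  classical
  have hl3 : 1 < Real.log 3 := by
    rw [Real.lt_log_iff_exp_lt (by norm_num)]
    linarith [Real.exp_one_lt_d9]
  have hll : 0 < Real.log (Real.log 3) := Real.log_pos hl3
  set D : ℝ := 3 * Real.exp 6 * (1 + 2 / Real.log (Real.log 3)) with hD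
  have hD1 : 1 ≤ D := by
    have h1 : 1 ≤ Real.exp 6 := Real.one_le_exp (by norm_num)
    have h2 : 0 < 2 / Real.log (Real.log 3) := by positivity
    nlinarith
  set F : ℝ := 384 * D * Real.exp 8 with hF
  have hF1 : 1 ≤ F := by
    have h1 : 1 ≤ Real.exp 8 := Real.one_le_exp (by norm_num)
    nlinarith
  have hlogF : 0 ≤ Real.log F := Real.log_nonneg hF1
  refine ⟨1 + Real.log F / Real.log (Real.log 3), by positivity, fun m k hm hk => ?_⟩
  have hm1 : (1 : ℝ) ≤ m := by exact_mod_cast hm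
  have hm0 : (0 : ℝ) < m := by linarith
  have hkm : (1 : ℝ) ≤ k / m := (one_le_div hm0).2 (by exact_mod_cast hk)
  have hC : (0 : ℝ) < Nat.choose (k - 1) (m - 1) := by
    exact_mod_cast Nat.choose_pos (Nat.sub_le_sub_right hk 1)
  let p : Nat.primesLE k → ℕ := fun i => i
  have : ∀ i, Fact (p i).Prime := fun i => ⟨Nat.prime_of_mem_primesLE i.2⟩
  have hp : Function.Injective p := Subtype.val_injective
  refine ⟨((∏ i, p i : ℕ) : ℝ) + 1, fun x hx A hA _ hdens => ?_⟩
  have hx0 : 0 < x := by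
    have : (0 : ℝ) ≤ ((∏ i, p i : ℕ) : ℝ) := Nat.cast_nonneg _
    linarith
  set q := Real.log (3 * k / m)
  have hq3 : Real.log 3 ≤ q :=
    Real.log_le_log (by norm_num) (by rw [mul_div_assoc]; linarith)
  set ℓ := Real.log q
  have hℓ : 0 < ℓ := Real.log_pos (by linarith)
  set Λ := Real.log (3 * m)
  have hΛ : Real.log 3 ≤ Λ := Real.log_le_log (by norm_num) (by linarith)
  have hΛ0 : 0 < Λ := by linarith
  set y := ⌈4 * q * m⌉₊
  have hy : 4 * q * m ≤ y := Nat.le_ceil _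
  have hy2 : 2 ≤ y := by
    have : (2 : ℝ) ≤ y := by nlinarith
    exact_mod_cast this
  have hsmall : smallFactor p y ≤ D * (ℓ * Λ) := by
    refine (smallFactor_primesLE_le k hy2).trans ?_
    rw [hD, mul_assoc (3 * Real.exp 6)]
    exact mul_le_mul_of_nonneg_left (log_ceil_le hm hq3) (by positivity)
  set B := (Fintype.piFinset fun _ : Fin m => symmIoc (2 * x)).filter (· ∈ A)
  have hB : Nat.card {h : Fin m → ℤ //
      h ∈ A ∧ ∀ i, -(2 * x) < (h i : ℝ) ∧ (h i : ℝ) ≤ 2 * x} = B.card := by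
    refine Nat.subtype_card _ fun h => ?_
    rw [Finset.mem_filter, Fintype.mem_piFinset, and_comm]
    simp only [mem_symmIoc]
  have hN : Nat.card (Nset k x) = (sifted p x).card :=
    Nat.subtype_card _ fun n => mem_sifted_primesLE_iff k x n
  have hT : Nat.card {h : Fin m → ℤ // h ∈ A ∧ ∀ i, h i ∈ Nset k x} =
      ((Fintype.piFinset fun _ : Fin m => sifted p x).filter (· ∈ A)).card := by
    refine Nat.subtype_card _ fun h => ?_
    rw [Finset.mem_filter, Fintype.mem_piFinset, and_comm]
    exact and_congr_right fun _ => forall_congr' fun i => mem_sifted_primesLE_iff k x (h i)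
  rw [hN, hT] at hdens
  rw [hB]
  have hδ0 : 0 < 1 / (8 * m * Nat.choose (k - 1) (m - 1) : ℝ) := by positivity
  have hcard : 1 / (8 * m * Nat.choose (k - 1) (m - 1) : ℝ) * ((sifted p x).card : ℝ) ^ m ≤
      (((Fintype.piFinset fun _ : Fin m => sifted p x).filter (· ∈ A)).card : ℝ) := by
    rcases (by positivity : (0 : ℝ) ≤ ((sifted p x).card : ℝ) ^ m).eq_or_lt with h0 | h0
    · rw [← h0, mul_zero]
      exact Nat.cast_nonneg _
    · exact ((lt_div_iff₀ h0).1 hdens).le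
  have hmain := card_translation_invariant_ge p hp hm (by linarith) hy hx
    (exp_bound_le_density hm hk) A hA hcard
  rw [one_div, inv_mul_le_iff₀ (by positivity)] at hmain
  have hm2 : (m : ℝ) ≤ 2 ^ m := by exact_mod_cast Nat.lt_two_pow_self.le
  have h64 : (64 : ℝ) ≤ 64 ^ m := le_self_pow₀ (by norm_num) (by omega)
  have hsf := smallFactor_nonneg p y
  have hchoose := choose_pred_le hm hk
  have hbound : x ^ m ≤ F ^ m * Λ ^ m * ((k / m : ℝ) * ℓ) ^ (m - 1) * B.card := by
    have hDm : D ^ (m - 1) ≤ D ^ m := pow_le_pow_right₀ hD1 (by omega)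
    have hΛm : Λ ^ (m - 1) ≤ Λ ^ m := pow_le_pow_right₀ (by linarith) (by omega)
    calc x ^ m ≤ 8 * m * Nat.choose (k - 1) (m - 1) *
          (8 * smallFactor p y ^ (m - 1) * Real.exp (8 * m) * B.card) := hmain
      _ ≤ 8 * 2 ^ m * (3 ^ m * (k / m : ℝ) ^ (m - 1)) *
          (8 * (D * (ℓ * Λ)) ^ (m - 1) * Real.exp (8 * m) * B.card) := by gcongr
      _ = 64 * 2 ^ m * 3 ^ m * D ^ (m - 1) * Real.exp 8 ^ m * Λ ^ (m - 1) *
          ((k / m : ℝ) * ℓ) ^ (m - 1) * B.card := by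
          rw [mul_comm 8 (m : ℝ), Real.exp_nat_mul, mul_pow, mul_pow, mul_pow]
          ring
      _ ≤ 64 ^ m * 2 ^ m * 3 ^ m * D ^ m * Real.exp 8 ^ m * Λ ^ m *
          ((k / m : ℝ) * ℓ) ^ (m - 1) * B.card := by gcongr
      _ = F ^ m * Λ ^ m * ((k / m : ℝ) * ℓ) ^ (m - 1) * B.card := by
          rw [hF, ← mul_pow 64, ← mul_pow, ← mul_pow, ← mul_pow]
          norm_num
  have hpow := pow_mul_pow_le_rpow hF1 hΛ m
  rw [div_le_iff₀ (by positivity), Real.rpow_neg hΛ0.le, inv_mul_le_iff₀ (by positivity)]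
  calc x ^ m ≤ _ := hbound
    _ ≤ Λ ^ ((1 + Real.log F / Real.log (Real.log 3)) * m) *
        ((k / m : ℝ) * ℓ) ^ (m - 1) * B.card := by gcongr
    _ = _ := by ring
end
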